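/- arXiv:cs/0205011 — 5 statements merged into one kernel-verified Lean document; each statement's English description precedes it below -/
import Mathlib

section
/- Every redundant edge of G lies on exactly one directed cycle of G. -/
/-- A set `S` of directed edges strongly connects the vertex set `V`:
for every pair of vertices there is a directed path using only edges of `S`. -/
def StronglyConnects {V : Type*} (S : Set (V × V)) : Prop :=
  ∀ u v : V, Relation.ReflTransGen (fun a b => (a, b) ∈ S) u v

/-- The edges of the closed walk determined by the vertex list `c`
(consecutive pairs, wrapping around from the last vertex to the first). -/
def cycleEdges {V : Type*} (c : List V) : List (V × V) := c.zip (c.rotate 1)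

/-- `c` is a directed cycle of the graph with edge set `E`: a nonempty list of
distinct vertices all of whose consecutive (wrap-around) pairs are edges.
Its length (number of edges) is `c.length`. -/
def IsCycle {V : Type*} (E : Set (V × V)) (c : List V) : Prop :=
  c ≠ [] ∧ c.Nodup ∧ ∀ e ∈ cycleEdges c, e ∈ E

/-- An edge is redundant if deleting it leaves a strongly connected graph. -/
def Redundant {V : Type*} (E : Set (V × V)) (e : V × V) : Prop :=
  e ∈ E ∧ StronglyConnects (E \ {e})

/-- An edge is necessary if deleting it destroys strong connectivity. -/
def Necessary {V : Type*} (E : Set (V × V)) (e : V × V) : Prop :=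
  e ∈ E ∧ ¬ StronglyConnects (E \ {e})

/-- The set of necessary edges. -/
def necessarySet {V : Type*} (E : Set (V × V)) : Set (V × V) :=
  {e | Necessary E e}

/-- An edge `(u, v)` is unsatisfied if there is no directed path from `v`
back to `u` consisting only of necessary edges. -/
def Unsatisfied {V : Type*} (E : Set (V × V)) (e : V × V) : Prop :=
  e ∈ E ∧ ¬ Relation.ReflTransGen (fun a b => Necessary E (a, b)) e.2 e.1

/-- A redundant edge `r` provides a cycle for an unsatisfied edge `(u, v)` if
there is a directed path from `v` to `u` consisting of necessary edges and `r`. -/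
def ProvidesCycle {V : Type*} (E : Set (V × V)) (r : V × V) (e : V × V) : Prop :=
  Relation.ReflTransGen (fun a b => Necessary E (a, b) ∨ (a, b) = r) e.2 e.1

/-- `w` is a cut vertex: deleting `w` disconnects the underlying undirected graph,
i.e. some two vertices distinct from `w` are joined by no undirected path avoiding `w`. -/
def IsCutVertex {V : Type*} (E : Set (V × V)) (w : V) : Prop :=
  ∃ u v : V, u ≠ w ∧ v ≠ w ∧
    ¬ Relation.ReflTransGen
        (fun a b => a ≠ w ∧ b ≠ w ∧ ((a, b) ∈ E ∨ (b, a) ∈ E)) u v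

/-!
Directed cycles through an edge `u → v` correspond to simple directed paths from `v` to `u`, and
strong connectivity provides such a path. Closing it up with `u → v` shows that it has the form
`v → u` or `v → w → u`. If `u → v` is redundant, there is also a detour from `u` to `v`: a simple
path with at least one inner vertex.

For each path `v → w → u` the vertex `w` lies on the detour, since otherwise the two together form a
cycle of length at least 4. If `w` and `w'` are two such vertices, the piece of the detour between
them continues through `u → v` to a cycle of length at least 4. If `v → u` is an edge as well, then
`w` is the only inner vertex of the detour, so `u`, `v`, `w` are pairwise joined in both directions.
An ear leaving this triangle at one vertex and returning at another would close up through the third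
one to a cycle of length at least 4. Hence every ear returns to the vertex where it left, and that
vertex separates the ear from the rest of the triangle.
-/

section

open Relation

variable {V : Type*} {E S : Set (V × V)} {T : Set V} {a b u v w w' x y : V}
  {c m p q s t : List V} {n : ℕ}

/-- A simple directed path from `u` to `v` using edges of `E`, recorded as the list of its vertices,
both endpoints included; `[u]` is the trivial path from `u` to `u`. -/
structure IsDipath (E : Set (V × V)) (u v : V) (p : List V) : Prop where
  isChain : p.IsChain fun a b => (a, b) ∈ E
  nodup : p.Nodup
  head? : p.head? = some u
  getLast? : p.getLast? = some v

namespace IsDipath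

theorem singleton (E : Set (V × V)) (u : V) : IsDipath E u u [u] :=
  ⟨by simp, by simp, by simp, by simp⟩

theorem cons (hp : IsDipath E v w p) (huv : (u, v) ∈ E) (hu : u ∉ p) :
    IsDipath E u w (u :: p) where
  isChain := List.isChain_cons.2 ⟨by simpa [hp.head?] using huv, hp.isChain⟩
  nodup := List.nodup_cons.2 ⟨hu, hp.nodup⟩
  head? := rfl
  getLast? := by simp [List.getLast?_cons, hp.getLast?]

theorem mono (hES : E ⊆ S) (hp : IsDipath E u v p) : IsDipath S u v p :=
  { hp with isChain := hp.isChain.imp fun _ _ h => hES h }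

theorem append (hp : IsDipath E u v p) (hq : IsDipath E x y q) (hvx : (v, x) ∈ E)
    (hpq : p.Disjoint q) : IsDipath E u y (p ++ q) where
  isChain := hp.isChain.append hq.isChain (by simpa [hp.getLast?, hq.head?] using hvx)
  nodup := hp.nodup.append hq.nodup hpq
  head? := by simp [List.head?_append, hp.head?]
  getLast? := by simp [List.getLast?_append, hq.getLast?]

theorem left_of_append_cons (hp : IsDipath E u v (s ++ a :: t)) : IsDipath E u a (s ++ [a]) where
  isChain := (List.isChain_split.1 hp.isChain).1
  nodup := hp.nodup.sublist (by simp)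
  head? := by simpa [List.head?_append] using hp.head?
  getLast? := by simp

theorem right_of_append_cons (hp : IsDipath E u v (s ++ a :: t)) : IsDipath E a v (a :: t) where
  isChain := (List.isChain_split.1 hp.isChain).2
  nodup := hp.nodup.sublist (by simp)
  head? := rfl
  getLast? := by simpa using hp.getLast?

theorem exists_subpath (hp : IsDipath E u v p) (ha : a ∈ p) (hb : b ∈ p) :
    ∃ q ⊆ p, IsDipath E a b q ∨ IsDipath E b a q := by
  obtain ⟨s, t, rfl⟩ := List.append_of_mem ha
  rcases List.mem_append.1 hb with hbs | hbt
  · obtain ⟨s, r, rfl⟩ := List.append_of_mem hbs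
    refine ⟨b :: (r ++ [a]), by grind, .inr ?_⟩
    exact right_of_append_cons (s := s) (by simpa using hp.left_of_append_cons)
  · obtain ⟨s', r, hr⟩ := List.append_of_mem hbt
    refine ⟨s' ++ [b], by grind, .inl ?_⟩
    exact left_of_append_cons (hr ▸ hp.right_of_append_cons)

theorem eq_singleton (hp : IsDipath E u u p) : p = [u] := by
  obtain ⟨q, rfl⟩ := List.head?_eq_some_iff.1 hp.head?
  rcases q.eq_nil_or_concat with rfl | ⟨r, x, rfl⟩
  · rfl
  · obtain rfl : x = u := by simpa [List.getLast?_cons] using hp.getLast?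
    simpa using hp.nodup

theorem exists_eq_cons_append (hp : IsDipath E u v p) (huv : u ≠ v) :
    ∃ m, p = u :: (m ++ [v]) := by
  obtain ⟨q, rfl⟩ := List.head?_eq_some_iff.1 hp.head?
  rcases q.eq_nil_or_concat with rfl | ⟨m, x, rfl⟩
  · exact absurd (by simpa using hp.getLast?) huv
  · obtain rfl : x = v := by simpa [List.getLast?_cons] using hp.getLast?
    exact ⟨m, by simp⟩

theorem length_pos (hp : IsDipath E u v p) : 0 < p.length :=
  List.length_pos_of_mem (List.mem_of_head? hp.head?)

theorem two_le_length (hp : IsDipath E u v p) (huv : u ≠ v) : 2 ≤ p.length := by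
  obtain ⟨m, rfl⟩ := hp.exists_eq_cons_append huv
  simp

theorem eq_pair_or_triple (hp : IsDipath E u v p) (huv : u ≠ v) (hlen : p.length ≤ 3) :
    p = [u, v] ∨ ∃ w, p = [u, w, v] := by
  obtain ⟨m, rfl⟩ := hp.exists_eq_cons_append huv
  match m with
  | [] => exact .inl rfl
  | [w] => exact .inr ⟨w, rfl⟩
  | _ :: _ :: _ => grind

end IsDipath

theorem exists_isDipath (h : ReflTransGen (fun a b => (a, b) ∈ E) u v) :
    ∃ p, IsDipath E u v p := by
  induction h using ReflTransGen.head_induction_on with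
  | refl => exact ⟨[v], .singleton E v⟩
  | @head a b hab _ ih =>
    obtain ⟨p, hp⟩ := ih
    by_cases ha : a ∈ p
    · obtain ⟨s, t, rfl⟩ := List.append_of_mem ha
      exact ⟨a :: t, hp.right_of_append_cons⟩
    · exact ⟨a :: p, hp.cons hab ha⟩

theorem isCycle_cons_iff : IsCycle E (u :: q) ↔
    (u :: q).Nodup ∧ (u :: q ++ [u]).IsChain fun a b => (a, b) ∈ E := by
  rw [List.isChain_cons_append_singleton_iff_forall₂, List.forall₂_iff_zip]
  simp [IsCycle, cycleEdges]

theorem IsDipath.isCycle (hp : IsDipath E u v p) (hvu : (v, u) ∈ E) : IsCycle E p := by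
  obtain ⟨q, rfl⟩ := List.head?_eq_some_iff.1 hp.head?
  refine isCycle_cons_iff.2 ⟨hp.nodup, hp.isChain.append (by simp) ?_⟩
  simpa [hp.getLast?] using hvu

theorem mem_cycleEdges_cons_iff (hu : u ∉ q) :
    (u, v) ∈ cycleEdges (u :: q) ↔ (q ++ [u]).head? = some v := by
  cases q with
  | nil => simp [cycleEdges, eq_comm]
  | cons x q =>
    have : (u, v) ∉ (x :: q).zip (q ++ [u]) := fun h => hu (List.of_mem_zip h).1
    simp [cycleEdges, this, eq_comm]

theorem isCycle_and_mem_cycleEdges_iff_exists_isDipath :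
    IsCycle E c ∧ c.head? = some u ∧ (u, v) ∈ cycleEdges c ↔
      (u, v) ∈ E ∧ ∃ q, c = u :: q ∧ IsDipath E v u (q ++ [u]) := by
  constructor
  · rintro ⟨hc, hhead, huv⟩
    obtain ⟨q, rfl⟩ := List.head?_eq_some_iff.1 hhead
    obtain ⟨hnodup, hchain⟩ := isCycle_cons_iff.1 hc
    refine ⟨hc.2.2 _ huv, q, rfl, hchain.tail, ?_, ?_, by simp⟩
    · exact (List.perm_append_singleton u q).nodup_iff.2 hnodup
    · exact (mem_cycleEdges_cons_iff (List.nodup_cons.1 hnodup).1).1 huv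
  · rintro ⟨huv, q, rfl, hq⟩
    have hnodup : (u :: q).Nodup := (List.perm_append_singleton u q).nodup_iff.1 hq.nodup
    refine ⟨isCycle_cons_iff.2 ⟨hnodup, List.isChain_cons.2 ⟨?_, hq.isChain⟩⟩, rfl, ?_⟩
    · simpa [hq.head?] using huv
    · exact (mem_cycleEdges_cons_iff (List.nodup_cons.1 hnodup).1).2 hq.head?

/-- `m` lists the inner vertices, at least one, of a directed path from `u` to `v` which is simple
except that `u = v` is allowed. The endpoints are left out so that the list joins with that of a
directed path from `v` to `u` to form a cycle. -/
def IsDetour (E : Set (V × V)) (u v : V) (m : List V) : Prop :=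
  ∃ x y, (u, x) ∈ E ∧ IsDipath E x y m ∧ (y, v) ∈ E ∧ u ∉ m ∧ v ∉ m

theorem IsDetour.length_pos (hm : IsDetour E u v m) : 0 < m.length := by
  obtain ⟨x, y, -, hm, -⟩ := hm
  exact hm.length_pos

theorem IsDetour.length_add_le (hcyc : ∀ c : List V, IsCycle E c → c.length ≤ n)
    (hm : IsDetour E u v m) (hq : IsDipath E v u q) (hmq : m.Disjoint q) :
    m.length + q.length ≤ n := by
  obtain ⟨x, y, hux, hm, hyv, -, -⟩ := hm
  simpa using hcyc _ ((hm.append hq hyv hmq).isCycle hux)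

theorem exists_isDetour_of_redundant (hr : Redundant E (u, v)) (huv : u ≠ v) :
    ∃ m, IsDetour E u v m := by
  obtain ⟨p, hp⟩ := exists_isDipath (hr.2 u v)
  obtain ⟨m, rfl⟩ := hp.exists_eq_cons_append huv
  have hm : m ≠ [] := by
    rintro rfl
    simpa using hp.isChain
  obtain ⟨x, hx⟩ : ∃ x, m.head? = some x := ⟨_, List.head?_eq_some_head hm⟩
  obtain ⟨y, hy⟩ : ∃ y, m.getLast? = some y := ⟨_, List.getLast?_eq_some_getLast hm⟩
  have hp := hp.mono Set.sdiff_subset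
  obtain ⟨hum, hmv⟩ := List.isChain_cons.1 hp.isChain
  obtain ⟨hm, -, hmv⟩ := List.isChain_append.1 hmv
  have hnodup := hp.nodup
  simp only [List.nodup_cons, List.nodup_append] at hnodup
  exact ⟨m, x, y, hum x (by simp [hx]), ⟨hm, by grind, hx, hy⟩, hmv y hy v (by simp),
    by grind, by grind⟩

/-- Some walk `a → z₁ → ⋯ → y` of positive length along edges of `E` has all its vertices except
possibly `a` outside `T`. When `a ∈ T`, an edge from `y` back into `T` completes it to an ear
at `T`. -/
def ReachesOutside (E : Set (V × V)) (T : Set V) : V → V → Prop :=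
  TransGen fun x y => (x, y) ∈ {e ∈ E | e.2 ∉ T}

namespace ReachesOutside

theorem notMem (h : ReachesOutside E T a y) : y ∉ T := by
  obtain ⟨x, -, hxy⟩ := TransGen.tail'_iff.1 h
  exact hxy.2

theorem exists_of_stronglyConnects (hconn : StronglyConnects E) (hT : T.Nonempty) (hy : y ∉ T) :
    ∃ a ∈ T, ReachesOutside E T a y := by
  obtain ⟨u, hu⟩ := hT
  induction hconn u y with
  | refl => exact absurd hu hy
  | @tail x y _ hxy ih =>
    by_cases hx : x ∈ T
    · exact ⟨x, hx, .single ⟨hxy, hy⟩⟩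
    · obtain ⟨a, ha, hax⟩ := ih hx
      exact ⟨a, ha, hax.tail ⟨hxy, hy⟩⟩

theorem exists_return (hconn : StronglyConnects E) (hT : T.Nonempty) (hy : y ∉ T) :
    ∃ z, (∀ a, ReachesOutside E T a y → ReachesOutside E T a z) ∧ ∃ b ∈ T, (z, b) ∈ E := by
  obtain ⟨u, hu⟩ := hT
  induction hconn y u using ReflTransGen.head_induction_on with
  | refl => exact absurd hu hy
  | @head y x hyx _ ih =>
    by_cases hx : x ∈ T
    · exact ⟨y, fun _ h => h, x, hx, hyx⟩
    · obtain ⟨z, hz, hzT⟩ := ih hx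
      exact ⟨z, fun a h => hz a (h.tail ⟨hyx, hx⟩), hzT⟩

theorem unique (hconn : StronglyConnects E)
    (hear : ∀ a ∈ T, ∀ b ∈ T, ∀ y, ReachesOutside E T a y → (y, b) ∈ E → a = b)
    (ha : a ∈ T) (hb : b ∈ T) (hay : ReachesOutside E T a y) (hby : ReachesOutside E T b y) :
    a = b := by
  obtain ⟨z, hyz, d, hd, hzd⟩ := exists_return hconn ⟨a, ha⟩ hay.notMem
  exact (hear a ha d hd z (hyz a hay) hzd).trans (hear b hb d hd z (hyz b hby) hzd).symm

end ReachesOutside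

theorem exists_isCutVertex_of_ears_closed (hconn : StronglyConnects E) (hT : T.Nontrivial)
    (hTuniv : T ≠ Set.univ)
    (hear : ∀ a ∈ T, ∀ b ∈ T, ∀ y, ReachesOutside E T a y → (y, b) ∈ E → a = b) :
    ∃ a, IsCutVertex E a := by
  obtain ⟨y₀, hy₀⟩ := (Set.ne_univ_iff_exists_notMem T).1 hTuniv
  obtain ⟨a, ha, hay₀⟩ := ReachesOutside.exists_of_stronglyConnects hconn hT.nonempty hy₀
  obtain ⟨b, hb, hba⟩ := hT.exists_ne a
  refine ⟨a, y₀, b, (ha.ne_of_notMem hy₀).symm, hba, fun h => ?_⟩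
  -- As ears at `T` are closed, the vertices reached from `a` outside `T` are joined to no other
  -- vertex than `a`, in either direction.
  suffices ReachesOutside E T a b from this.notMem hb
  clear hb hba
  induction h with
  | refl => exact hay₀
  | @tail y z _ hyz hay =>
    obtain ⟨-, hza, hyz | hzy⟩ := hyz
    · have hz : z ∉ T := fun hz => hza (hear a ha z hz y hay hyz).symm
      exact hay.tail ⟨hyz, hz⟩
    · have hz : z ∉ T := fun hz =>
        hza (ReachesOutside.unique hconn hear hz ha (.single ⟨hzy, hay.notMem⟩) hay)
      obtain ⟨d, hd, hdz⟩ := ReachesOutside.exists_of_stronglyConnects hconn hT.nonempty hz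
      have hdy : ReachesOutside E T d y := hdz.tail ⟨hzy, hay.notMem⟩
      exact ReachesOutside.unique hconn hear hd ha hdy hay ▸ hdz

theorem ReachesOutside.exists_isDetour (h : ReachesOutside E T a y) (ha : a ∈ T) (hb : b ∈ T)
    (hyb : (y, b) ∈ E) : ∃ m, IsDetour E a b m ∧ ∀ x ∈ m, x ∉ T := by
  obtain ⟨x, ⟨hax, hx⟩, hxy⟩ := TransGen.head'_iff.1 h
  obtain ⟨m, hm⟩ := exists_isDipath hxy
  have hmT : ∀ z ∈ m, z ∉ T :=
    hm.isChain.induction (· ∉ T) m (fun _ _ h _ => h.2) fun hne => by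
      rwa [List.head_of_head?_eq_some hm.head?]
  exact ⟨m, ⟨x, y, hax, hm.mono (Set.sep_subset _ _), hyb, fun h => hmT a h ha,
    fun h => hmT b h hb⟩, hmT⟩

section CyclesOfLengthAtMostThree

variable (hcyc : ∀ c : List V, IsCycle E c → c.length ≤ 3)
include hcyc

theorem exists_isCutVertex_of_clique (hconn : StronglyConnects E)
    (hT : T.Pairwise fun a b => (a, b) ∈ E) (hTcard : 3 ≤ T.encard) (hTuniv : T ≠ Set.univ) :
    ∃ a, IsCutVertex E a := by
  have hTnontriv : T.Nontrivial :=
    Set.one_lt_encard_iff_nontrivial.1 (lt_of_lt_of_le (by simp) hTcard)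
  refine exists_isCutVertex_of_ears_closed hconn hTnontriv hTuniv fun a ha b hb y hay hyb => ?_
  by_contra hab
  obtain ⟨d, hd, hda, hdb⟩ : ∃ d ∈ T, d ≠ a ∧ d ≠ b := by
    by_contra! h
    have hTab : T ⊆ {a, b} := fun d hd => or_iff_not_imp_left.2 (h d hd)
    have := hTcard.trans (Set.encard_le_encard hTab)
    rw [Set.encard_pair hab] at this
    exact absurd this (by decide)
  obtain ⟨m, hm, hmT⟩ := hay.exists_isDetour ha hb hyb
  have hbda : IsDipath E b a [b, d, a] :=
    ((IsDipath.singleton E a).cons (hT hd ha hda) (by simpa)).cons (hT hb hd hdb.symm) (by grind)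
  have := hm.length_add_le hcyc hbda (by grind [List.Disjoint])
  have := hm.length_pos
  grind

theorem mem_of_isDetour_of_isDipath_triple (hm : IsDetour E u v m) (hw : IsDipath E v u [v, w, u]) :
    w ∈ m := by
  by_contra hwm
  have := hm.length_add_le hcyc hw (by grind [List.Disjoint, IsDetour])
  have := hm.length_pos
  grind

theorem eq_of_isDetour_of_isDipath_triple (huv : (u, v) ∈ E) (hm : IsDetour E u v m)
    (hw : IsDipath E v u [v, w, u]) (hw' : IsDipath E v u [v, w', u]) : w = w' := by
  by_contra hww'
  have hwm := mem_of_isDetour_of_isDipath_triple hcyc hm hw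
  have hwm' := mem_of_isDetour_of_isDipath_triple hcyc hm hw'
  obtain ⟨x, y, -, hm, -, hum, hvm⟩ := hm
  obtain ⟨hvw, hwu⟩ : (v, w) ∈ E ∧ (w, u) ∈ E := by simpa using hw.isChain
  obtain ⟨hvw', hwu'⟩ : (v, w') ∈ E ∧ (w', u) ∈ E := by simpa using hw'.isChain
  obtain ⟨r, hrm, hr⟩ := hm.exists_subpath hwm hwm'
  have hrlen : 2 ≤ r.length :=
    hr.elim (·.two_le_length hww') (·.two_le_length (Ne.symm hww'))
  have hrdetour : IsDetour E v u r := by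
    rcases hr with hr | hr
    · exact ⟨w, w', hvw, hr, hwu', mt (@hrm v) hvm, mt (@hrm u) hum⟩
    · exact ⟨w', w, hvw', hr, hwu, mt (@hrm v) hvm, mt (@hrm u) hum⟩
  have huvpath : IsDipath E u v [u, v] := (IsDipath.singleton E v).cons huv (by grind [hw.nodup])
  have := hrdetour.length_add_le hcyc huvpath (by grind [List.Disjoint])
  grind

theorem exists_isCutVertex_of_isDetour (hconn : StronglyConnects E) (hcard : 4 ≤ ENat.card V)
    (huv : (u, v) ∈ E) (hm : IsDetour E u v m) (hvu : IsDipath E v u [v, u])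
    (hw : IsDipath E v u [v, w, u]) : ∃ a, IsCutVertex E a := by
  have hwm := mem_of_isDetour_of_isDipath_triple hcyc hm hw
  have hlen := hm.length_add_le hcyc hvu (by grind [List.Disjoint, IsDetour])
  have hpos := hm.length_pos
  obtain ⟨z, rfl⟩ := List.length_eq_one_iff.1 (show m.length = 1 by grind)
  obtain rfl : w = z := by simpa using hwm
  obtain ⟨x, y, huw, hwpath, hwv, -⟩ := hm
  obtain rfl : w = x := by simpa using hwpath.head?
  obtain rfl : w = y := by simpa using hwpath.getLast?
  have hvuE : (v, u) ∈ E := by simpa using hvu.isChain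
  obtain ⟨hvw, hwu⟩ : (v, w) ∈ E ∧ (w, u) ∈ E := by simpa using hw.isChain
  have hnodup := hw.nodup
  have hTcard : ({u, v, w} : Set V).encard = 3 :=
    Set.encard_eq_three.2 ⟨u, v, w, by grind, by grind, by grind, rfl⟩
  refine exists_isCutVertex_of_clique hcyc hconn (T := {u, v, w}) ?_ hTcard.ge ?_
  · rintro a (rfl | rfl | rfl) b (rfl | rfl | rfl) <;> simp_all
  · intro huniv
    rw [huniv, Set.encard_univ] at hTcard
    exact absurd (hTcard ▸ hcard) (by decide)

theorem isDipath_unique_of_redundant (hconn : StronglyConnects E) (hcard : 4 ≤ ENat.card V)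
    (hcut : ∀ w, ¬ IsCutVertex E w) (hr : Redundant E (u, v)) (hp : IsDipath E v u p)
    (hq : IsDipath E v u q) : p = q := by
  rcases eq_or_ne u v with rfl | huv
  · rw [hp.eq_singleton, hq.eq_singleton]
  obtain ⟨m, hm⟩ := exists_isDetour_of_redundant hr huv
  have hshape {r} (hr' : IsDipath E v u r) : r = [v, u] ∨ ∃ w, r = [v, w, u] :=
    hr'.eq_pair_or_triple huv.symm (hcyc r (hr'.isCycle hr.1))
  have hnot {w} (hvu : IsDipath E v u [v, u]) (hw : IsDipath E v u [v, w, u]) : False :=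
    (exists_isCutVertex_of_isDetour hcyc hconn hcard hr.1 hm hvu hw).elim hcut
  rcases hshape hp with rfl | ⟨w, rfl⟩ <;> rcases hshape hq with rfl | ⟨w', rfl⟩
  · rfl
  · exact (hnot hp hq).elim
  · exact (hnot hq hp).elim
  · rw [eq_of_isDetour_of_isDipath_triple hcyc hr.1 hm hp hq]

end CyclesOfLengthAtMostThree

end

theorem redundant_edge_unique_cycle_general {V : Type*} (E : Set (V × V))
    (hconn : StronglyConnects E)
    (hcyc : ∀ c : List V, IsCycle E c → c.length ≤ 3)
    (hcard : 4 ≤ ENat.card V)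
    (hcut : ∀ w : V, ¬ IsCutVertex E w)
    (u v : V) (hred : Redundant E (u, v)) :
    ∃! c : List V, IsCycle E c ∧ c.head? = some u ∧ (u, v) ∈ cycleEdges c := by
  simp only [isCycle_and_mem_cycleEdges_iff_exists_isDipath]
  obtain ⟨p, hp⟩ := exists_isDipath (hconn v u)
  obtain ⟨q, rfl⟩ := List.getLast?_eq_some_iff.1 hp.getLast?
  refine ⟨u :: q, ⟨hred.1, q, rfl, hp⟩, ?_⟩
  rintro _ ⟨-, r, rfl, hr⟩
  have := isDipath_unique_of_redundant hcyc hconn hcard hcut hred hr hp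
  rw [List.append_cancel_right this]

/-- Every redundant edge of `G` lies on exactly one directed cycle of `G`
(cycles are normalized to start at the tail of the given edge, so that each
geometric cycle through the edge is represented by a unique list). -/
theorem redundant_edge_unique_cycle {V : Type*} [Fintype V] (E : Set (V × V))
    (hconn : StronglyConnects E)
    (hcyc : ∀ c : List V, IsCycle E c → c.length ≤ 3)
    (hcard : 4 ≤ Fintype.card V)
    (hcut : ∀ w : V, ¬ IsCutVertex E w)
    (u v : V) (hred : Redundant E (u, v)) :
    ∃! c : List V, IsCycle E c ∧ c.head? = some u ∧ (u, v) ∈ cycleEdges c := by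
  refine redundant_edge_unique_cycle_general E hconn hcyc ?_ hcut u v hred
  rw [ENat.card_eq_coe_fintype_card]
  exact_mod_cast hcard
end

section
/- Every directed cycle of G contains at most one redundant edge. -/
/-!
In a strongly connected graph without cut vertices, every proper vertex set `K` with at least two
elements has an ear: a path through vertices outside `K` that joins two different vertices of `K`.
Otherwise each outside vertex is attached to a single vertex `k` of `K`, and the outside vertices
attached to `k` are separated by `k` from the rest of `K`. If `K` is a complete subgraph on as many
vertices as a longest cycle, an ear closed up by a Hamiltonian path of `K` would be a longer cycle,
so `K` is the whole graph. When all cycles have length at most three and there are at least four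
vertices, a triangle and its reversal are therefore never both cycles.

If two edges of a cycle are redundant, each has a detour. The bound on cycle lengths forces the
detour around an edge of a triangle to pass through the third vertex and to replace each of the
other two edges, traversed backwards, by a path with at most two edges. The detours around two edges
then close up to a cycle that either is too long or reverses the original triangle. On a 2-cycle,
the detours have a single interior vertex each and give a 4-cycle or two opposite triangles.
-/

/-- The vertex `v` can be reached from `u` along the directed edges in `S`. -/
abbrev Reaches {V : Type*} (S : Set (V × V)) (u v : V) : Prop :=
  Relation.ReflTransGen (fun a b => (a, b) ∈ S) u v

/-- A directed walk from `u` to `v` along edges in `S`, encoded by the list `l` of its vertices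
strictly between its two ends. Such a walk has at least one edge, and `u = v` is allowed. -/
def IsWalk {V : Type*} (S : Set (V × V)) (u : V) (l : List V) (v : V) : Prop :=
  (u :: l ++ [v]).IsChain fun a b => (a, b) ∈ S

section

variable {V : Type*} {S T E : Set (V × V)} {u v w x : V} {l m : List V}

section Walks

@[simp]
theorem isWalk_nil : IsWalk S u [] v ↔ (u, v) ∈ S := by simp [IsWalk]

@[simp]
theorem isWalk_append_cons : IsWalk S u (l ++ x :: m) v ↔ IsWalk S u l x ∧ IsWalk S x m v := by
  simpa [IsWalk] using List.isChain_cons_split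

@[simp]
theorem isWalk_cons : IsWalk S u (x :: l) v ↔ (u, x) ∈ S ∧ IsWalk S x l v := by
  simpa using isWalk_append_cons (S := S) (u := u) (l := []) (x := x) (m := l) (v := v)

theorem IsWalk.mono (hST : S ⊆ T) (h : IsWalk S u l v) : IsWalk T u l v :=
  List.IsChain.imp (fun _ _ he => hST he) h

theorem isCycle_cons_iff_s1 : IsCycle E (u :: l) ↔ (u :: l).Nodup ∧ IsWalk E u l u := by
  rw [IsWalk, List.isChain_cons_append_singleton_iff_forall₂, List.forall₂_iff_zip]
  simp [IsCycle, cycleEdges]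

theorem IsCycle.rotate_one (h : IsCycle E (u :: l)) : IsCycle E (l ++ [u]) := by
  cases l with
  | nil => exact h
  | cons x l =>
    obtain ⟨hnd, hwalk⟩ := isCycle_cons_iff_s1.1 h
    obtain ⟨hux, hxu⟩ := isWalk_cons.1 hwalk
    exact isCycle_cons_iff_s1.2 ⟨(List.perm_append_singleton u (x :: l)).nodup_iff.2 hnd,
      isWalk_append_cons.2 ⟨hxu, isWalk_nil.2 hux⟩⟩

theorem Reaches.exists_nodup_isWalk (h : Reaches S u v) (huv : u ≠ v) :
    ∃ l, IsWalk S u l v ∧ (u :: l ++ [v]).Nodup := by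
  induction h using Relation.ReflTransGen.head_induction_on with
  | refl => exact absurd rfl huv
  | @head a c hac _ ih =>
    obtain rfl | hcv := eq_or_ne c v
    · exact ⟨[], by simpa using hac, by simpa using huv⟩
    obtain ⟨l, hwalk, hnd⟩ := ih hcv
    by_cases hal : a ∈ c :: l
    · obtain ⟨s, t, hst⟩ := List.append_of_mem hal
      have hsplit : c :: l ++ [v] = s ++ (a :: t ++ [v]) := by simp [hst]
      rw [IsWalk, hsplit] at hwalk
      rw [hsplit] at hnd
      exact ⟨t, hwalk.right_of_append, hnd.of_append_right⟩
    · exact ⟨c :: l, isWalk_cons.2 ⟨hac, hwalk⟩, by simp_all⟩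

end Walks

section Ears

variable {K : Set V}

theorem exists_mem_reaches_diff (h : Reaches E u v) (hu : u ∈ K) :
    ∃ k ∈ K, Reaches (E \ K ×ˢ K) k v := by
  induction h with
  | refl => exact ⟨u, hu, .refl⟩
  | @tail b c _ hbc ih =>
    by_cases hK : (b, c) ∈ K ×ˢ K
    · exact ⟨c, hK.2, .refl⟩
    · obtain ⟨k, hk, hkb⟩ := ih
      exact ⟨k, hk, hkb.tail ⟨hbc, hK⟩⟩

theorem exists_mem_diff_reaches (h : Reaches E u v) (hv : v ∈ K) :
    ∃ k ∈ K, Reaches (E \ K ×ˢ K) u k := by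
  induction h using Relation.ReflTransGen.head_induction_on with
  | refl => exact ⟨v, hv, .refl⟩
  | @head a b hab _ ih =>
    by_cases hK : (a, b) ∈ K ×ˢ K
    · exact ⟨a, hK.1, .refl⟩
    · obtain ⟨k, hk, hbk⟩ := ih
      exact ⟨k, hk, hbk.head ⟨hab, hK⟩⟩

theorem exists_ne_reaches_diff (hconn : StronglyConnects E) (hcut : ∀ w, ¬ IsCutVertex E w)
    (hK : K.Nontrivial) (hKV : K ≠ Set.univ) :
    ∃ k ∈ K, ∃ k' ∈ K, k ≠ k' ∧ Reaches (E \ K ×ˢ K) k k' := by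
  by_contra! hsep
  have eq_of_reaches {a b : V} (ha : a ∈ K) (hb : b ∈ K) (hab : Reaches (E \ K ×ˢ K) a b) :
      a = b := by
    by_contra hne
    exact hsep a ha b hb hne hab
  obtain ⟨z₀, hz₀⟩ := (Set.ne_univ_iff_exists_notMem K).1 hKV
  obtain ⟨k₀, hk₀⟩ := hK.nonempty
  obtain ⟨k, hk, hkz₀⟩ := exists_mem_reaches_diff (hconn k₀ z₀) hk₀
  obtain ⟨t, ht, htk⟩ := hK.exists_ne k
  refine hcut k ⟨z₀, t, fun h => hz₀ (h ▸ hk), htk, fun hwalk => ?_⟩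
  suffices ∀ z, Relation.ReflTransGen
      (fun a b => a ≠ k ∧ b ≠ k ∧ ((a, b) ∈ E ∨ (b, a) ∈ E)) z₀ z →
      z ∉ K ∧ Reaches (E \ K ×ˢ K) k z from (this t hwalk).1 ht
  intro z hz
  induction hz with
  | refl => exact ⟨hz₀, hkz₀⟩
  | @tail z z' _ hstep ih =>
    obtain ⟨hzK, hkz⟩ := ih
    obtain ⟨-, hz'k, hzz'⟩ := hstep
    have hkz' : Reaches (E \ K ×ˢ K) k z' := by
      obtain hzz' | hz'z := hzz'
      · exact hkz.tail ⟨hzz', fun h => hzK h.1⟩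
      -- Against the direction of the edge: `z` returns to some `b ∈ K`, which is both `k` and the
      -- vertex `a ∈ K` from which `z'` is reached.
      obtain ⟨a, ha, haz'⟩ := exists_mem_reaches_diff (hconn k z') hk
      obtain ⟨b, hb, hzb⟩ := exists_mem_diff_reaches (hconn z k) hk
      have hkb : k = b := eq_of_reaches hk hb (hkz.trans hzb)
      have hab : a = b :=
        eq_of_reaches ha hb ((haz'.tail ⟨hz'z, fun h => hzK h.2⟩).trans hzb)
      rwa [hkb, ← hab]
    exact ⟨fun hz'K => hz'k (eq_of_reaches hk hz'K hkz').symm, hkz'⟩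

theorem exists_ear (hconn : StronglyConnects E) (hcut : ∀ w, ¬ IsCutVertex E w)
    (hK : K.Nontrivial) (hKV : K ≠ Set.univ) :
    ∃ k ∈ K, ∃ k' ∈ K, k ≠ k' ∧ ∃ l ≠ [], IsWalk E k l k' ∧ l.Nodup ∧ ∀ x ∈ l, x ∉ K := by
  classical
  obtain ⟨k, hk, b, hb, hkb, hreach⟩ := exists_ne_reaches_diff hconn hcut hK hKV
  obtain ⟨m, hwalk, hnd⟩ := hreach.exists_nodup_isWalk hkb
  obtain ⟨k', hfind⟩ : ∃ k', (m ++ [b]).find? (· ∈ K) = some k' :=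
    Option.isSome_iff_exists.1 (List.find?_isSome.2 ⟨b, by simp, by simpa using hb⟩)
  obtain ⟨hk', l, t, hsplit, hl⟩ := List.find?_eq_some_iff_append.1 hfind
  simp only [decide_eq_true_eq, Bool.not_eq_true', decide_eq_false_iff_not] at hk' hl
  have hsplit' : k :: m ++ [b] = (k :: l ++ [k']) ++ t := by simp [hsplit]
  rw [IsWalk, hsplit'] at hwalk
  rw [hsplit'] at hnd
  have hear : IsWalk (E \ K ×ˢ K) k l k' := hwalk.left_of_append
  have hne : l ≠ [] := by
    rintro rfl
    exact (isWalk_nil.1 hear).2 ⟨hk, hk'⟩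
  exact ⟨k, hk, k', hk', by grind, l, hne, hear.mono Set.sdiff_subset, by grind, hl⟩

end Ears

section CompleteSubgraphs

variable {K : Finset V}

theorem exists_spanning_isWalk_of_pairwise (hadj : (K : Set V).Pairwise fun a b => (a, b) ∈ E)
    (hu : u ∈ K) (hv : v ∈ K) (huv : u ≠ v) :
    ∃ l, IsWalk E u l v ∧ (u :: l ++ [v]).Nodup ∧ ∀ x, x ∈ u :: l ++ [v] ↔ x ∈ K := by
  classical
  have hnd : (u :: ((K.erase u).erase v).toList ++ [v]).Nodup := by
    simp +contextual [List.nodup_append, Finset.nodup_toList, huv]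
  have hmem : ∀ x, x ∈ u :: ((K.erase u).erase v).toList ++ [v] ↔ x ∈ K := by
    simp only [List.cons_append, List.mem_cons, List.mem_append, Finset.mem_toList]
    grind
  refine ⟨_, ?_, hnd, hmem⟩
  exact (hnd.pairwise_of_forall_ne fun a ha b hb hab =>
    hadj ((hmem a).1 ha) ((hmem b).1 hb) hab).isChain

theorem coe_eq_univ_of_pairwise_of_length_le (hconn : StronglyConnects E)
    (hcut : ∀ w, ¬ IsCutVertex E w) (hK : K.Nontrivial)
    (hadj : (K : Set V).Pairwise fun a b => (a, b) ∈ E)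
    (hcyc : ∀ c, IsCycle E c → c.length ≤ K.card) : (K : Set V) = Set.univ := by
  classical
  by_contra hKV
  obtain ⟨k, hk, k', hk', hne, l, hl, hear, hnd, hout⟩ := exists_ear hconn hcut hK hKV
  obtain ⟨r, hback, hrnd, hmem⟩ := exists_spanning_isWalk_of_pairwise hadj hk' hk hne.symm
  have hcard : r.length + 2 = K.card := by
    have hfinset : (k' :: r ++ [k]).toFinset = K := by
      ext x
      rw [List.mem_toFinset, hmem]
    rw [← hfinset, List.toFinset_card_of_nodup hrnd]
    simp
  have hdisj : l.Disjoint (k' :: r ++ [k]) := fun x hx hx' => hout x hx ((hmem x).1 hx')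
  have hcycle : IsCycle E (k :: (l ++ k' :: r)) := by
    refine isCycle_cons_iff_s1.2 ⟨?_, isWalk_append_cons.2 ⟨hear, hback⟩⟩
    have hperm : (l ++ (k' :: r ++ [k])).Perm (k :: (l ++ k' :: r)) := by
      rw [← List.append_assoc]
      exact List.perm_append_singleton k _
    exact hperm.nodup_iff.1 (hnd.append hrnd hdisj)
  have hpos := List.length_pos_iff.2 hl
  have hlength := hcyc _ hcycle
  simp only [List.length_cons, List.length_append] at hlength
  omega

end CompleteSubgraphs

section Redundant

theorem Redundant.stronglyConnects {e : V × V} (h : Redundant E e) : StronglyConnects E :=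
  fun u v => Relation.ReflTransGen.mono (fun _ _ he => he.1) u v (h.2 u v)

theorem Redundant.exists_nodup_isWalk (h : Redundant E (u, v)) (huv : u ≠ v) :
    ∃ l ≠ [], IsWalk E u l v ∧ (u :: l ++ [v]).Nodup := by
  obtain ⟨l, hwalk, hnd⟩ := Reaches.exists_nodup_isWalk (h.2 u v) huv
  refine ⟨l, ?_, hwalk.mono Set.sdiff_subset, hnd⟩
  rintro rfl
  exact (isWalk_nil.1 hwalk).2 rfl

end Redundant

section CycleLengthAtMostThree

variable (hcyc : ∀ c, IsCycle E c → c.length ≤ 3)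
include hcyc

theorem not_isCycle_reverse_triangle (hconn : StronglyConnects E)
    (hcard : 4 ≤ ENat.card V) (hcut : ∀ w, ¬ IsCutVertex E w) (h : IsCycle E [u, v, w]) :
    ¬ IsCycle E [w, v, u] := by
  classical
  intro h'
  simp only [isCycle_cons_iff_s1, isWalk_cons, isWalk_nil] at h h'
  have hthree : ({u, v, w} : Finset V).card = 3 := by
    simpa using List.toFinset_card_of_nodup h.1
  have huniv : (({u, v, w} : Finset V) : Set V) = Set.univ := by
    refine coe_eq_univ_of_pairwise_of_length_le hconn hcut ?_ ?_ (hthree ▸ hcyc)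
    · exact Finset.one_lt_card_iff_nontrivial.1 (by omega)
    · intro a ha b hb hab
      grind
  rw [← Set.encard_univ, ← huniv, Set.encard_coe_eq_coe_finsetCard, hthree] at hcard
  exact absurd hcard (by decide)

theorem Redundant.exists_middle (h : Redundant E (u, v)) (huv : u ≠ v) (hvu : (v, u) ∈ E) :
    ∃ x, IsCycle E [u, x, v] := by
  obtain ⟨l, hl, hwalk, hnd⟩ := h.exists_nodup_isWalk huv
  have hcycle : IsCycle E (u :: (l ++ [v])) :=
    isCycle_cons_iff_s1.2 ⟨hnd, isWalk_append_cons.2 ⟨hwalk, isWalk_nil.2 hvu⟩⟩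
  have hlength := hcyc _ hcycle
  match l with
  | [] => exact absurd rfl hl
  | [x] => exact ⟨x, hcycle⟩
  | _ :: _ :: _ => simp +arith at hlength

theorem not_redundant_swap (hcard : 4 ≤ ENat.card V) (hcut : ∀ w, ¬ IsCutVertex E w)
    (huv : u ≠ v) (h : Redundant E (u, v)) : ¬ Redundant E (v, u) := by
  intro h'
  obtain ⟨x, hx⟩ := h.exists_middle hcyc huv h'.1
  obtain ⟨y, hy⟩ := h'.exists_middle hcyc huv.symm h.1
  obtain rfl | hxy := eq_or_ne x y
  · exact not_isCycle_reverse_triangle hcyc h.stronglyConnects hcard hcut hx hy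
  · have hcycle : IsCycle E [u, x, v, y] := by
      simp only [isCycle_cons_iff_s1, isWalk_cons, isWalk_nil] at hx hy ⊢
      grind
    simpa using hcyc _ hcycle

theorem Redundant.exists_isWalk_of_triangle (h : Redundant E (u, v))
    (htri : IsCycle E [u, v, w]) :
    ∃ s t, IsWalk E u s w ∧ IsWalk E w t v ∧ s.length ≤ 1 ∧ t.length ≤ 1 ∧
      (u :: s ++ w :: t ++ [v]).Nodup := by
  simp only [isCycle_cons_iff_s1, isWalk_cons, isWalk_nil] at htri
  obtain ⟨htnd, -, hvw, hwu⟩ := htri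
  obtain ⟨l, hl, hwalk, hnd⟩ := h.exists_nodup_isWalk (u := u) (v := v) (by grind)
  have hwl : w ∈ l := by
    by_contra hwl
    have hcycle : IsCycle E (u :: (l ++ [v, w])) :=
      isCycle_cons_iff_s1.2 ⟨by grind, by simp [hwalk, hvw, hwu]⟩
    have hlength := hcyc _ hcycle
    have := List.length_pos_iff.2 hl
    simp only [List.length_cons, List.length_append] at hlength
    omega
  obtain ⟨s, t, rfl⟩ := List.append_of_mem hwl
  obtain ⟨hs, ht⟩ := isWalk_append_cons.1 hwalk
  have hscycle : IsCycle E (u :: (s ++ [w])) :=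
    isCycle_cons_iff_s1.2 ⟨by grind, isWalk_append_cons.2 ⟨hs, isWalk_nil.2 hwu⟩⟩
  have htcycle : IsCycle E (w :: (t ++ [v])) :=
    isCycle_cons_iff_s1.2 ⟨by grind, isWalk_append_cons.2 ⟨ht, isWalk_nil.2 hvw⟩⟩
  have hslength := hcyc _ hscycle
  have htlength := hcyc _ htcycle
  simp only [List.length_cons, List.length_append] at hslength htlength
  exact ⟨s, t, hs, ht, by grind, by grind, by grind⟩

theorem disjoint_of_isWalk_of_triangle (htri : IsCycle E [u, v, w])
    (hs : IsWalk E u l w) (ht : IsWalk E w m v) (hls : l.length ≤ 1) (hlt : m.length ≤ 1)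
    (hu : u ∉ l) (hv : v ∉ m) (hw : w ∉ l) : l.Disjoint m := by
  intro a hal ham
  obtain ⟨b, rfl⟩ : ∃ b, l = [b] :=
    List.length_eq_one_iff.1 (hls.antisymm (List.length_pos_of_mem hal))
  obtain ⟨b', rfl⟩ : ∃ b', m = [b'] :=
    List.length_eq_one_iff.1 (hlt.antisymm (List.length_pos_of_mem ham))
  obtain rfl := List.mem_singleton.1 hal
  obtain rfl := List.mem_singleton.1 ham
  have hcycle : IsCycle E [u, a, v, w] := by
    simp only [isCycle_cons_iff_s1, isWalk_cons, isWalk_nil] at htri hs ht ⊢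
    grind
  simpa using hcyc _ hcycle

theorem not_redundant_next_of_triangle (hcard : 4 ≤ ENat.card V)
    (hcut : ∀ w, ¬ IsCutVertex E w) (htri : IsCycle E [u, v, w]) (h : Redundant E (u, v)) :
    ¬ Redundant E (v, w) := by
  intro h'
  have htri₁ : IsCycle E [v, w, u] := htri.rotate_one
  have htri₂ : IsCycle E [w, u, v] := htri₁.rotate_one
  obtain ⟨s, t, hs, ht, hsl, htl, hnd⟩ := h.exists_isWalk_of_triangle hcyc htri
  obtain ⟨m, _, hm, -, hml, -, hmnd⟩ := h'.exists_isWalk_of_triangle hcyc htri₁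
  simp only [List.cons_append, List.nodup_cons, List.nodup_append, List.mem_append, List.mem_cons,
    not_or] at hnd hmnd
  have htm : t.Disjoint m :=
    disjoint_of_isWalk_of_triangle hcyc htri₂ ht hm htl hml (by grind) (by grind) (by grind)
  have hms : m.Disjoint s :=
    disjoint_of_isWalk_of_triangle hcyc htri₁ hm hs hml hsl (by grind) (by grind) (by grind)
  have hcycle : IsCycle E (u :: (s ++ w :: (t ++ v :: m))) :=
    isCycle_cons_iff_s1.2 ⟨by grind [List.Disjoint], by simp [hs, ht, hm]⟩
  have hlength := hcyc _ hcycle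
  simp only [List.length_cons, List.length_append] at hlength
  obtain rfl : s = [] := List.length_eq_zero_iff.1 (by omega)
  obtain rfl : t = [] := List.length_eq_zero_iff.1 (by omega)
  obtain rfl : m = [] := List.length_eq_zero_iff.1 (by omega)
  exact not_isCycle_reverse_triangle hcyc h.stronglyConnects hcard hcut htri₁ hcycle

end CycleLengthAtMostThree

end

theorem cycle_at_most_one_redundant_general {V : Type*} (E : Set (V × V))
    (hcyc : ∀ c : List V, IsCycle E c → c.length ≤ 3)
    (hcard : 4 ≤ ENat.card V)
    (hcut : ∀ w : V, ¬ IsCutVertex E w)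
    (c : List V) (hc : IsCycle E c) :
    ∀ e₁ ∈ cycleEdges c, ∀ e₂ ∈ cycleEdges c,
      Redundant E e₁ → Redundant E e₂ → e₁ = e₂ := by
  intro e₁ h₁ e₂ h₂ r₁ r₂
  have hlength := hcyc c hc
  match c with
  | [] => simp [cycleEdges] at h₁
  | [a] => simp_all [cycleEdges]
  | [a, b] =>
    have hab : a ≠ b := by simpa using hc.2.1
    have := not_redundant_swap hcyc hcard hcut hab
    change e₁ ∈ [(a, b), (b, a)] at h₁
    change e₂ ∈ [(a, b), (b, a)] at h₂
    grind
  | [a, b, d] =>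
    have hbda : IsCycle E [b, d, a] := hc.rotate_one
    have hdab : IsCycle E [d, a, b] := hbda.rotate_one
    have hnext {x y z : V} (h : IsCycle E [x, y, z]) :=
      not_redundant_next_of_triangle hcyc hcard hcut h
    have hab := hnext hc
    have hbd := hnext hbda
    have hda := hnext hdab
    change e₁ ∈ [(a, b), (b, d), (d, a)] at h₁
    change e₂ ∈ [(a, b), (b, d), (d, a)] at h₂
    grind
  | _ :: _ :: _ :: _ :: _ => simp +arith at hlength

/-- Every directed cycle of `G` contains at most one redundant edge. -/
theorem cycle_at_most_one_redundant {V : Type*} [Fintype V] (E : Set (V × V))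
    (hconn : StronglyConnects E)
    (hcyc : ∀ c : List V, IsCycle E c → c.length ≤ 3)
    (hcard : 4 ≤ Fintype.card V)
    (hcut : ∀ w : V, ¬ IsCutVertex E w)
    (c : List V) (hc : IsCycle E c) :
    ∀ e₁ ∈ cycleEdges c, ∀ e₂ ∈ cycleEdges c,
      Redundant E e₁ → Redundant E e₂ → e₁ = e₂ := by
  exact cycle_at_most_one_redundant_general E hcyc (by simpa using hcard) hcut c hc
end

section
/- Every unsatisfied edge of G is necessary (that is, no unsatisfied edge is redundant). -/
/-!
Since cycles have at most three edges, a simple path closed up by an edge has at most one interior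
vertex; so if `t → z → s`, then every simple path from `s` to `t` other than the edge `(s, t)` runs
through `z`. Let `(u, v)` be redundant with `u ≠ v`.

* If `(v, u)` is not an edge, then two different vertices `w` with `v → w → u` would both lie on a
  simple path from `u` to `v` avoiding `(u, v)`, and the piece between them would close up through
  `(u, v)` to a cycle with at least four edges. So `w` is unique; deleting `(v, w)` or `(w, u)`
  cuts `v` off from `u`, both edges are necessary, and `(u, v)` is satisfied.
* If `(v, u)` is an edge and also redundant, then detours around `(u, v)` and `(v, u)` have the same
  interior vertex `w`, and `{u, w, v}` is a clique in which all six directed edges are present. A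
  walk that leaves such a clique can only come back where it left, so every vertex has a unique
  point at which walks from it enter the clique. Edges outside the clique preserve that point, and
  so it would be a cut vertex as soon as there is a fourth vertex.
-/

section

open List Relation

variable {V : Type*} {E F : Set (V × V)} {S : Set V} {a b s t u v w x y z : V} {l m : List V}

theorem StronglyConnects.mono (h : StronglyConnects F) (hFE : F ⊆ E) : StronglyConnects E :=
  fun u v => ReflTransGen.mono (fun _ _ hxy => hFE hxy) u v (h u v)

theorem necessary_iff_not_redundant {e : V × V} (he : e ∈ E) :
    Necessary E e ↔ ¬ Redundant E e := by
  simp only [Necessary, Redundant, he, true_and]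

theorem exists_infix_of_mem_of_mem (hx : x ∈ l) (hy : y ∈ l) (hxy : x ≠ y) :
    ∃ m, x :: m ++ [y] <:+: l ∨ y :: m ++ [x] <:+: l := by
  obtain ⟨l₁, l₂, rfl⟩ := append_of_mem hx
  obtain hy | hy : y ∈ l₁ ∨ y ∈ l₂ := by simpa [hxy.symm] using hy
  · obtain ⟨p, q, rfl⟩ := append_of_mem hy
    exact ⟨q, .inr ⟨p, l₂, by simp⟩⟩
  · obtain ⟨p, q, rfl⟩ := append_of_mem hy
    exact ⟨p, .inl ⟨l₁, q, by simp⟩⟩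

/-- A directed path from `a` to `b ≠ a` in the graph with edge set `F` that repeats no vertex;
`l` lists its interior vertices. -/
structure IsSimplePath (F : Set (V × V)) (a : V) (l : List V) (b : V) : Prop where
  isChain : (a :: l ++ [b]).IsChain fun x y => (x, y) ∈ F
  nodup : (a :: l ++ [b]).Nodup

namespace IsSimplePath

theorem mono (h : IsSimplePath F a l b) (hFE : F ⊆ E) : IsSimplePath E a l b :=
  ⟨h.isChain.imp fun _ _ hxy => hFE hxy, h.nodup⟩

theorem cons (h : IsSimplePath F a l b) (hz : (z, a) ∈ F) (hzl : z ∉ a :: l ++ [b]) :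
    IsSimplePath F z (a :: l) b :=
  ⟨h.isChain.cons_cons hz, nodup_cons.2 ⟨hzl, h.nodup⟩⟩

theorem of_infix (h : IsSimplePath F a l b) (hxy : x :: m ++ [y] <:+: a :: l ++ [b]) :
    IsSimplePath F x m y :=
  ⟨h.isChain.infix hxy, h.nodup.sublist hxy.sublist⟩

theorem forall_mem_fst (h : IsSimplePath F a l b) : ∀ x ∈ a :: l, ∃ y, (x, y) ∈ F :=
  ((forall₂_and_left _ _).1 <|
    (isChain_cons_append_singleton_iff_forall₂.1 h.isChain).imp fun _ y hxy => ⟨⟨y, hxy⟩, hxy⟩).1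

theorem isCycle (h : IsSimplePath E a l b) (hba : (b, a) ∈ E) : IsCycle E (a :: l ++ [b]) := by
  have hclosed : (a :: (l ++ [b]) ++ [a]).IsChain fun x y => (x, y) ∈ E := by
    simpa using isChain_split.2 ⟨h.isChain, isChain_pair.2 hba⟩
  obtain ⟨-, hedges⟩ := forall₂_iff_zip.1 (isChain_cons_append_singleton_iff_forall₂.1 hclosed)
  exact ⟨by simp, h.nodup, fun _ he => hedges (by simpa [cycleEdges] using he)⟩

end IsSimplePath

theorem exists_isSimplePath (h : ReflTransGen (fun x y => (x, y) ∈ F) a b) (hab : a ≠ b) :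
    ∃ l, IsSimplePath F a l b := by
  induction h using ReflTransGen.head_induction_on with
  | refl => exact absurd rfl hab
  | @head a c hac _ ih =>
    obtain rfl | hcb := eq_or_ne c b
    · exact ⟨[], by simpa using hac, by simpa using hab⟩
    obtain ⟨l, hl⟩ := ih hcb
    by_cases ha : a ∈ c :: l ++ [b]
    · obtain ⟨l₁, l₂, hl₁₂⟩ : ∃ l₁ l₂, c :: l = l₁ ++ a :: l₂ :=
        append_of_mem (by simpa [hab] using ha)
      exact ⟨l₂, hl.of_infix ⟨l₁, [], by simp [hl₁₂]⟩⟩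
    · exact ⟨c :: l, hl.cons hac ha⟩

section ShortCycles

variable (hcyc : ∀ c : List V, IsCycle E c → c.length ≤ 3)
include hcyc

theorem IsSimplePath.length_le_one (h : IsSimplePath E a l b) (hba : (b, a) ∈ E) :
    l.length ≤ 1 := by
  simpa [Nat.lt_succ_iff] using hcyc _ (h.isCycle hba)

theorem exists_midpoint (hFE : F ⊆ E) (hba : (b, a) ∈ E) (hab : a ≠ b) (habF : (a, b) ∉ F)
    (h : ReflTransGen (fun x y => (x, y) ∈ F) a b) :
    ∃ c, c ≠ a ∧ c ≠ b ∧ (a, c) ∈ F ∧ (c, b) ∈ F := by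
  obtain ⟨l, hl⟩ := exists_isSimplePath h hab
  match l, hl, (hl.mono hFE).length_le_one hcyc hba with
  | [], ⟨hab', _⟩, _ => simp [habF] at hab'
  | [c], ⟨hchain, _⟩, _ =>
    obtain ⟨hac, hcb⟩ : (a, c) ∈ F ∧ (c, b) ∈ F := by simpa using hchain
    exact ⟨c, fun h => habF (h ▸ hcb), fun h => habF (h ▸ hac), hac, hcb⟩

theorem IsSimplePath.mem_of_midpoint (h : IsSimplePath (E \ {(s, t)}) s l t)
    (htz : (t, z) ∈ E) (hzs : (z, s) ∈ E) : z ∈ s :: l ++ [t] := by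
  by_contra hz
  have hlen := ((h.mono Set.sdiff_subset).cons hzs hz).length_le_one hcyc htz
  obtain rfl : l = [] := by simpa using hlen
  simpa using h.isChain

theorem IsSimplePath.not_infix_of_midpoints (h : IsSimplePath E u l v) (huv : (u, v) ∈ E)
    (hvx : (v, x) ∈ E) (hyu : (y, u) ∈ E) : ¬ x :: m ++ [y] <:+: l := by
  intro hxy
  obtain ⟨hul, huv_ne, hvl⟩ : u ∉ l ∧ u ≠ v ∧ v ∉ l := by
    have := h.nodup
    grind
  have hpath : IsSimplePath E x m y := h.of_infix (hxy.trans ⟨[u], [v], by simp⟩)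
  have hpath_v := hpath.cons hvx fun hv => hvl (hxy.subset hv)
  have hpath_uv := hpath_v.cons huv fun hu =>
    (mem_cons.1 hu).elim huv_ne fun hu => hul (hxy.subset hu)
  simpa using hpath_uv.length_le_one hcyc hyu

theorem eq_of_midpoints (huv : u ≠ v) (hr : Redundant E (u, v))
    (hxu : x ≠ u) (hxv : x ≠ v) (hvx : (v, x) ∈ E) (hx : (x, u) ∈ E)
    (hyu : y ≠ u) (hyv : y ≠ v) (hvy : (v, y) ∈ E) (hy : (y, u) ∈ E) : x = y := by
  obtain ⟨l, hl⟩ := exists_isSimplePath (hr.2 u v) huv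
  have hxl : x ∈ l := by simpa [hxu, hxv] using hl.mem_of_midpoint hcyc hvx hx
  have hyl : y ∈ l := by simpa [hyu, hyv] using hl.mem_of_midpoint hcyc hvy hy
  have hl := hl.mono Set.sdiff_subset
  by_contra hxy
  obtain ⟨m, hm | hm⟩ := exists_infix_of_mem_of_mem hxl hyl hxy
  · exact hl.not_infix_of_midpoints hcyc hr.1 hvx hy hm
  · exact hl.not_infix_of_midpoints hcyc hr.1 hvy hx hm

theorem reflTransGen_necessary_of_redundant (huv : u ≠ v) (hr : Redundant E (u, v))
    (hvu : (v, u) ∉ E) :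
    ReflTransGen (fun x y => Necessary E (x, y)) v u := by
  have midpoint_of_connects {F : Set (V × V)} (hFE : F ⊆ E) (hF : StronglyConnects F) :
      ∃ c, c ≠ v ∧ c ≠ u ∧ (v, c) ∈ F ∧ (c, u) ∈ F :=
    exists_midpoint hcyc hFE hr.1 huv.symm (fun h => hvu (hFE h)) (hF v u)
  obtain ⟨w, hwv, hwu, ⟨hvw, -⟩, ⟨hw, -⟩⟩ := midpoint_of_connects Set.sdiff_subset hr.2
  have eq_w (c : V) (hcv : c ≠ v) (hcu : c ≠ u) (hvc : (v, c) ∈ E) (hc : (c, u) ∈ E) : c = w :=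
    eq_of_midpoints hcyc huv hr hcu hcv hvc hc hwu hwv hvw hw
  have hvw_nec : Necessary E (v, w) := ⟨hvw, fun hconn => by
    obtain ⟨c, hcv, hcu, ⟨hvc, hne⟩, ⟨hc, -⟩⟩ := midpoint_of_connects Set.sdiff_subset hconn
    exact hne (eq_w c hcv hcu hvc hc ▸ rfl)⟩
  have hwu_nec : Necessary E (w, u) := ⟨hw, fun hconn => by
    obtain ⟨c, hcv, hcu, ⟨hvc, -⟩, ⟨hc, hne⟩⟩ := midpoint_of_connects Set.sdiff_subset hconn
    exact hne (eq_w c hcv hcu hvc hc ▸ rfl)⟩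
  exact .head hvw_nec (.single hwu_nec)

theorem exists_clique_of_redundant (huv : u ≠ v) (hr : Redundant E (u, v))
    (hr' : Redundant E (v, u)) :
    ∃ S : Set V, (S.Pairwise fun x y => (x, y) ∈ E) ∧ S.encard = 3 := by
  obtain ⟨huvE, hconn⟩ := hr
  obtain ⟨hvuE, hconn'⟩ := hr'
  obtain ⟨w, hwu, hwv, ⟨huw, -⟩, ⟨hw, -⟩⟩ :=
    exists_midpoint hcyc Set.sdiff_subset hvuE huv (by simp) (hconn u v)
  obtain ⟨x, hxv, hxu, ⟨hvx, -⟩, ⟨hx, -⟩⟩ :=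
    exists_midpoint hcyc Set.sdiff_subset huvE huv.symm (by simp) (hconn' v u)
  have hpath : IsSimplePath (E \ {(u, v)}) u [w] v :=
    ⟨by simp [huw, hw, hwu, hwv], by simp [huv, hwu.symm, hwv]⟩
  obtain rfl : x = w := by simpa [hxu, hxv] using hpath.mem_of_midpoint hcyc hvx hx
  refine ⟨{u, x, v}, ?_, Set.encard_eq_three.2 ⟨u, x, v, hxu.symm, huv, hxv, rfl⟩⟩
  rintro a (rfl | rfl | rfl) b (rfl | rfl | rfl) hab <;>
    first | assumption | exact absurd rfl hab

end ShortCycles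

/-- Some directed walk from `w` in the graph with edge set `E` meets `S` for the first time
at `s`. -/
def EntersAt (E : Set (V × V)) (S : Set V) (w s : V) : Prop :=
  s ∈ S ∧ ReflTransGen (fun x y => (x, y) ∈ {e ∈ E | e.1 ∉ S}) w s

namespace EntersAt

theorem self (hs : s ∈ S) : EntersAt E S s s := ⟨hs, .refl⟩

theorem head (hx : x ∉ S) (hxy : (x, y) ∈ E) (h : EntersAt E S y s) : EntersAt E S x s :=
  ⟨h.1, .head ⟨hxy, hx⟩ h.2⟩

theorem eq_of_mem (h : EntersAt E S x s) (hx : x ∈ S) : s = x := by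
  obtain rfl | ⟨y, ⟨-, hxS⟩, -⟩ := h.2.cases_head
  · rfl
  · exact absurd hx hxS

end EntersAt

theorem exists_entersAt (hconn : StronglyConnects E) (hS : S.Nonempty) (w : V) :
    ∃ s, EntersAt E S w s := by
  obtain ⟨r, hr⟩ := hS
  induction hconn w r using ReflTransGen.head_induction_on with
  | refl => exact ⟨r, .self hr⟩
  | @head x y hxy _ ih =>
    by_cases hx : x ∈ S
    · exact ⟨x, .self hx⟩
    · exact ih.imp fun _ hs => hs.head hx hxy

theorem exists_mem_ne_ne_of_two_lt_encard (hS : 2 < S.encard) (x y : V) :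
    ∃ z ∈ S, z ≠ x ∧ z ≠ y := by
  by_contra! h
  have hsub : S ⊆ {x, y} := fun z hz => or_iff_not_imp_left.2 (h z hz)
  refine hS.not_ge ?_
  calc
    S.encard ≤ ({x, y} : Set V).encard := Set.encard_le_encard hsub
    _ ≤ ({y} : Set V).encard + 1 := Set.encard_insert_le _ _
    _ = 2 := by rw [Set.encard_singleton, one_add_one_eq_two]

section Clique

variable (hcyc : ∀ c : List V, IsCycle E c → c.length ≤ 3)
  (hS : S.Pairwise fun x y => (x, y) ∈ E) (hcard : 2 < S.encard)
include hcyc hS hcard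

theorem EntersAt.eq_of_edge (h : EntersAt E S x t) (hs : s ∈ S) (hsx : (s, x) ∈ E) (hx : x ∉ S) :
    t = s := by
  by_contra hts
  obtain ⟨ht, hxt⟩ := h
  obtain ⟨l, hl⟩ := exists_isSimplePath hxt (ne_of_mem_of_not_mem ht hx).symm
  have houtside : ∀ y ∈ x :: l, y ∉ S := fun y hy => (hl.forall_mem_fst y hy).elim fun _ h => h.2
  have hpath : IsSimplePath (E \ {(s, t)}) s (x :: l) t := by
    refine (hl.mono ?_).cons ⟨hsx, by grind⟩ (by grind)
    rintro ⟨y, z⟩ ⟨hyz, hy⟩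
    exact ⟨hyz, by grind⟩
  obtain ⟨z, hz, hzs, hzt⟩ := exists_mem_ne_ne_of_two_lt_encard hcard s t
  have hzl := hpath.mem_of_midpoint hcyc (hS ht hz hzt.symm) (hS hz hs hzs)
  grind

theorem EntersAt.unique (hconn : StronglyConnects E) (hs : EntersAt E S w s)
    (ht : EntersAt E S w t) : s = t := by
  suffices h : ∃ r, ∀ t, EntersAt E S w t → t = r by
    obtain ⟨r, hr⟩ := h
    exact (hr s hs).trans (hr t ht).symm
  clear hs ht
  obtain ⟨r, hr⟩ : S.Nonempty := Set.encard_pos.1 (pos_of_gt hcard)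
  induction hconn r w with
  | refl => exact ⟨r, fun t ht => ht.eq_of_mem hr⟩
  | @tail x y _ hxy ih =>
    by_cases hy : y ∈ S
    · exact ⟨y, fun t ht => ht.eq_of_mem hy⟩
    by_cases hx : x ∈ S
    · exact ⟨x, fun t ht => ht.eq_of_edge hcyc hS hcard hx hxy hy⟩
    · exact ih.imp fun _ h t ht => h t (ht.head hx hxy)

theorem entersAt_iff_of_edge (hconn : StronglyConnects E) (hxy : (x, y) ∈ E)
    (hout : x ∉ S ∨ y ∉ S) : EntersAt E S x s ↔ EntersAt E S y s := by
  obtain ⟨t, hyt⟩ := exists_entersAt hconn (Set.encard_pos.1 (pos_of_gt hcard)) y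
  by_cases hx : x ∈ S
  · have hy : y ∉ S := hout.resolve_left (not_not_intro hx)
    have eq_x {r : V} (hr : EntersAt E S y r) : r = x := hr.eq_of_edge hcyc hS hcard hx hxy hy
    exact ⟨fun h => by rwa [h.eq_of_mem hx, ← eq_x hyt], fun h => by rw [eq_x h]; exact .self hx⟩
  · refine ⟨fun h => ?_, .head hx hxy⟩
    rwa [h.unique hcyc hS hcard hconn (hyt.head hx hxy)]

theorem eq_univ_of_clique (hconn : StronglyConnects E) (hcut : ∀ w, ¬ IsCutVertex E w) :
    S = Set.univ := by
  refine Set.eq_univ_of_forall fun w => by_contra fun hw => ?_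
  obtain ⟨s, hws⟩ := exists_entersAt hconn (Set.encard_pos.1 (pos_of_gt hcard)) w
  obtain ⟨t, ht, hts, -⟩ := exists_mem_ne_ne_of_two_lt_encard hcard s s
  refine hcut s ⟨w, t, (ne_of_mem_of_not_mem hws.1 hw).symm, hts, fun hwt => ?_⟩
  suffices h : EntersAt E S t s from hts (h.eq_of_mem ht).symm
  clear ht hts
  induction hwt with
  | refl => exact hws
  | @tail x y _ hxy hxs =>
    obtain ⟨hx_ne, -, hadj⟩ := hxy
    have hx : x ∉ S := fun hx => hx_ne (hxs.eq_of_mem hx).symm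
    obtain hxy | hyx := hadj
    · exact (entersAt_iff_of_edge hcyc hS hcard hconn hxy (.inl hx)).1 hxs
    · exact (entersAt_iff_of_edge hcyc hS hcard hconn hyx (.inr hx)).2 hxs

end Clique

theorem necessary_of_redundant_swap (hcyc : ∀ c : List V, IsCycle E c → c.length ≤ 3)
    (hcard : 4 ≤ ENat.card V) (hcut : ∀ w, ¬ IsCutVertex E w) (huv : u ≠ v)
    (hr : Redundant E (u, v)) (hvu : (v, u) ∈ E) : Necessary E (v, u) := by
  rw [necessary_iff_not_redundant hvu]
  intro hr'
  obtain ⟨S, hS, hthree⟩ := exists_clique_of_redundant hcyc huv hr hr'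
  have huniv : S = Set.univ :=
    eq_univ_of_clique hcyc hS (by rw [hthree]; decide) (hr.2.mono Set.sdiff_subset) hcut
  rw [huniv, Set.encard_univ] at hthree
  exact absurd hcard (by rw [hthree]; decide)

theorem unsatisfied_is_necessary_general (hcyc : ∀ c : List V, IsCycle E c → c.length ≤ 3)
    (hcard : 4 ≤ ENat.card V) (hcut : ∀ w, ¬ IsCutVertex E w) {e : V × V}
    (he : Unsatisfied E e) : Necessary E e := by
  obtain ⟨u, v⟩ := e
  obtain ⟨huvE, hunsat⟩ := he
  rw [necessary_iff_not_redundant huvE]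
  intro hr
  have huv : u ≠ v := fun h => hunsat (h ▸ .refl)
  by_cases hvu : (v, u) ∈ E
  · exact hunsat (.single (necessary_of_redundant_swap hcyc hcard hcut huv hr hvu))
  · exact hunsat (reflTransGen_necessary_of_redundant hcyc huv hr hvu)

end

/-- Every unsatisfied edge of `G` is necessary. -/
theorem unsatisfied_is_necessary {V : Type*} [Fintype V] (E : Set (V × V))
    (hconn : StronglyConnects E)
    (hcyc : ∀ c : List V, IsCycle E c → c.length ≤ 3)
    (hcard : 4 ≤ Fintype.card V)
    (hcut : ∀ w : V, ¬ IsCutVertex E w)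
    (e : V × V) (he : Unsatisfied E e) :
    Necessary E e := by
  have hcard' : 4 ≤ ENat.card V := by rwa [ENat.card_eq_coe_fintype_card, Nat.ofNat_le_cast]
  exact unsatisfied_is_necessary_general hcyc hcard' hcut he
end

section
/- There is no cycle in the underlying undirected graph of G all of whose edges come from unsatisfied edges of G; equivalently, the set of unsatisfied edges forms a forest in the underlying undirected graph. -/
/-- The undirected graph on `V` whose edges are the unsatisfied edges of `G`. -/
def unsatGraph {V : Type*} (E : Set (V × V)) : SimpleGraph V where
  Adj a b := a ≠ b ∧ (Unsatisfied E (a, b) ∨ Unsatisfied E (b, a))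
  symm := ⟨fun a b h => ⟨Ne.symm h.1, h.2.symm⟩⟩
  loopless := ⟨fun a h => h.1 rfl⟩

/-!
If two edges of a directed triangle were redundant, the walks replacing them would have to pass
through the third vertex, and shortness of cycles would then force all three reverse edges. A
bidirected triangle missing some vertex `d` contains a cut vertex: walks leaving the triangle can
only come back at the vertex where they left it, so the one at which `d` enters separates `d` from
the other two. Hence a directed triangle has at most one redundant edge, and therefore every
unsatisfied edge is necessary. Finally, if `(u, v)` is unsatisfied, the set of vertices reachable
from `u` without `(u, v)` does not contain `v`, and no other unsatisfied edge leaves or enters it,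
so `{u, v}` is a bridge of the graph of unsatisfied edges.
-/

open Relation

section

variable {V : Type*} {E F : Set (V × V)} {S : Set V} {T : Finset V} {a b c d p r s t u v x y : V}

/-- There is a directed walk from `u` to `v`, possibly trivial, with all edges in `E`. -/
def Reach (E : Set (V × V)) (u v : V) : Prop :=
  ReflTransGen (fun a b => (a, b) ∈ E) u v

/-- The edges of `E` with no endpoint in `S`, i.e. the edges of the digraph with the vertices of
`S` deleted. -/
def deleteVerts (E : Set (V × V)) (S : Set V) : Set (V × V) :=
  {e ∈ E | e.1 ∉ S ∧ e.2 ∉ S}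

/-- Every directed cycle has at most three edges. -/
def ShortCycles (E : Set (V × V)) : Prop :=
  ∀ c : List V, IsCycle E c → c.length ≤ 3

/-- The undirected graph of the pairs of distinct vertices joined by edges in both directions. Its
`3`-cliques are the bidirected triangles. -/
def bidirectedGraph (E : Set (V × V)) : SimpleGraph V where
  Adj a b := a ≠ b ∧ (a, b) ∈ E ∧ (b, a) ∈ E
  symm := ⟨fun _ _ h => ⟨h.1.symm, h.2.2, h.2.1⟩⟩
  loopless := ⟨fun _ h => h.1 rfl⟩

/-- `x` reaches `t` by a nontrivial directed walk all of whose vertices except `t` and possibly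
`x` lie outside `T`; for `x ∉ T` and `t ∈ T`, the walk first meets `T` at `t`. -/
def ExitsAt (E : Set (V × V)) (T : Set V) (x t : V) : Prop :=
  ∃ y ∉ T, Reach (deleteVerts E T) x y ∧ (y, t) ∈ E

theorem mem_deleteVerts : (a, b) ∈ deleteVerts E S ↔ (a, b) ∈ E ∧ a ∉ S ∧ b ∉ S :=
  Iff.rfl

theorem deleteVerts_subset : deleteVerts E S ⊆ E :=
  Set.sep_subset _ _

theorem Reach.mono (h : Reach E u v) (hEF : E ⊆ F) : Reach F u v :=
  ReflTransGen.mono (fun _ _ hab => hEF hab) _ _ h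

theorem Reach.exists_last_before (h : Reach E u v) (hu : u ∉ S) (hv : v ∈ S) :
    ∃ y ∉ S, ∃ z ∈ S, Reach (deleteVerts E S) u y ∧ (y, z) ∈ E := by
  induction h using ReflTransGen.head_induction_on with
  | refl => exact absurd hv hu
  | @head p q hpq _ ih =>
    by_cases hq : q ∈ S
    · exact ⟨p, hu, q, hq, .refl, hpq⟩
    · obtain ⟨y, hy, z, hz, hqy, hyz⟩ := ih hq
      exact ⟨y, hy, z, hz, .head ⟨hpq, hu, hq⟩ hqy, hyz⟩

theorem Reach.exists_first_after (h : Reach E u v) (hu : u ∈ S) (hv : v ∉ S) :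
    ∃ y ∈ S, ∃ z ∉ S, (y, z) ∈ E ∧ Reach (deleteVerts E S) z v := by
  induction h with
  | refl => exact absurd hu hv
  | @tail p q _ hpq ih =>
    by_cases hp : p ∈ S
    · exact ⟨p, hp, q, hv, hpq, .refl⟩
    · obtain ⟨y, hy, z, hz, hyz, hzp⟩ := ih hp
      exact ⟨y, hy, z, hz, hyz, .tail hzp ⟨hpq, hp, hv⟩⟩

theorem StronglyConnects.diff_of_reach (hconn : StronglyConnects E)
    (h : Reach (E \ {(a, b)}) a b) : StronglyConnects (E \ {(a, b)}) := by
  intro u v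
  induction hconn u v with
  | refl => exact .refl
  | @tail p q _ hpq ih =>
    by_cases heq : (p, q) = (a, b)
    · obtain ⟨rfl, rfl⟩ := Prod.mk.inj heq
      exact ih.trans h
    · exact ih.tail ⟨hpq, heq⟩

theorem StronglyConnects.diff_of_not_necessary {e : V × V} (hconn : StronglyConnects E)
    (he : ¬ Necessary E e) : StronglyConnects (E \ {e}) := by
  by_cases hmem : e ∈ E
  · by_contra hdiff
    exact he ⟨hmem, hdiff⟩
  · rwa [Set.sdiff_singleton_eq_self hmem]

theorem exists_nodup_isChain_of_reflTransGen {R : V → V → Prop} (h : ReflTransGen R x y) :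
    ∃ (l : List V) (hl : l ≠ []), l.Nodup ∧ l.IsChain R ∧ l.head hl = x ∧ l.getLast hl = y := by
  induction h using ReflTransGen.head_induction_on with
  | refl => exact ⟨[y], by simp⟩
  | @head p q hpq _ ih =>
    obtain ⟨l, hl, hnodup, hchain, hhead, hlast⟩ := ih
    by_cases hp : p ∈ l
    · obtain ⟨l₁, l₂, rfl⟩ := List.append_of_mem hp
      refine ⟨p :: l₂, by simp, (List.nodup_append.1 hnodup).2.1,
        (List.isChain_append.1 hchain).2.1, rfl, ?_⟩
      simpa using hlast
    · refine ⟨p :: l, by simp, List.nodup_cons.2 ⟨hp, hnodup⟩, ?_, rfl, ?_⟩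
      · exact hchain.cons_of_ne_nil hl (hhead ▸ hpq)
      · rwa [List.getLast_cons hl]

theorem isCycle_of_isChain {l : List V} (hl : l ≠ []) (hnodup : l.Nodup)
    (hchain : l.IsChain fun a b => (a, b) ∈ E) (hclose : (l.getLast hl, l.head hl) ∈ E) :
    IsCycle E l := by
  refine ⟨hl, hnodup, fun e he => ?_⟩
  obtain ⟨i, hi, rfl⟩ := List.getElem_of_mem he
  simp only [cycleEdges, List.length_zip, List.length_rotate, min_self] at hi
  simp only [cycleEdges, List.getElem_zip, List.getElem_rotate]
  obtain hlt | hlast : i + 1 < l.length ∨ i + 1 = l.length := by lia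
  · simpa only [Nat.mod_eq_of_lt hlt] using List.isChain_iff_getElem.1 hchain i hlt
  · simpa only [List.getLast_eq_getElem, List.head_eq_getElem, ← hlast, Nat.add_sub_cancel,
      Nat.mod_self] using hclose

theorem ShortCycles.mono (hF : ShortCycles F) (hEF : E ⊆ F) : ShortCycles E :=
  fun c hc => hF c ⟨hc.1, hc.2.1, fun e he => hEF (hc.2.2 e he)⟩

theorem ShortCycles.mem_or_exists_mem (hE : ShortCycles E) (h : Reach E x y) (hxy : x ≠ y)
    (hyx : (y, x) ∈ E) :
    (x, y) ∈ E ∨ ∃ z, z ≠ x ∧ z ≠ y ∧ (x, z) ∈ E ∧ (z, y) ∈ E := by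
  obtain ⟨l, hl, hnodup, hchain, rfl, rfl⟩ := exists_nodup_isChain_of_reflTransGen h
  have hlen := hE l (isCycle_of_isChain hl hnodup hchain hyx)
  match l with
  | [_] => exact absurd rfl hxy
  | [_, _] => exact .inl (by simpa using hchain)
  | [_, z, _] => exact .inr ⟨z, by grind⟩
  | _ :: _ :: _ :: _ :: _ => simp only [List.length_cons] at hlen; lia

theorem ShortCycles.reach_deleteVerts_singleton (hE : ShortCycles E) (h : Reach E x y)
    (hyx : (y, x) ∈ E) (hxp : x ≠ p) (hyp : y ≠ p) (hp : (x, p) ∈ E → (p, y) ∉ E) :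
    Reach (deleteVerts E {p}) x y := by
  by_cases hxy : x = y
  · exact hxy ▸ .refl
  obtain hxy | ⟨z, -, -, hxz, hzy⟩ := hE.mem_or_exists_mem h hxy hyx
  · exact .single ⟨hxy, hxp, hyp⟩
  · have hzp : z ≠ p := by
      rintro rfl
      exact hp hxz hzy
    exact .head ⟨hxz, hxp, hzp⟩ (.single ⟨hzy, hzp, hyp⟩)

-- In the graph formed by such a walk together with `b → c → a`, the only edge leaving `c` is
-- `c → a` and `a → b` is missing, so no directed path from `c` to `b` has at most two edges.
theorem ShortCycles.not_reach_of_mem_of_mem (hE : ShortCycles E) (hab : a ≠ b) (hbc : b ≠ c)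
    (ebc : (b, c) ∈ E) (eca : (c, a) ∈ E) :
    ¬ Reach (deleteVerts E {c} \ {(a, b)}) a b := by
  intro h
  set F : Set (V × V) := deleteVerts E {c} \ {(a, b)} ∪ {(b, c), (c, a)} with hF
  have hFE : F ⊆ E := by grind [deleteVerts]
  have hcb : Reach F c b := .head (by simp [hF]) (h.mono Set.subset_union_left)
  have := (hE.mono hFE).mem_or_exists_mem hcb hbc.symm (by simp [hF])
  grind [mem_deleteVerts]

theorem ShortCycles.reach_third_of_bypass (hE : ShortCycles E) (hab : a ≠ b) (hbc : b ≠ c)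
    (hca : c ≠ a) (ebc : (b, c) ∈ E) (eca : (c, a) ∈ E) (h : Reach (E \ {(a, b)}) a b) :
    Reach (deleteVerts E {b}) a c := by
  obtain ⟨y, hy, z, hz, hay, hyz⟩ := h.exists_last_before (S := {b, c}) (by simp [*, hca.symm])
    (by simp)
  obtain rfl | rfl : z = b ∨ z = c := hz
  · refine absurd (ReflTransGen.tail (hay.mono ?_) ?_) (hE.not_reach_of_mem_of_mem hab hbc ebc eca)
    all_goals grind [deleteVerts]
  · refine ReflTransGen.tail (hay.mono ?_) ?_
    all_goals grind [deleteVerts]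

theorem ShortCycles.third_reach_of_bypass (hE : ShortCycles E) (hab : a ≠ b) (hbc : b ≠ c)
    (hca : c ≠ a) (ebc : (b, c) ∈ E) (eca : (c, a) ∈ E) (h : Reach (E \ {(a, b)}) a b) :
    Reach (deleteVerts E {a}) c b := by
  obtain ⟨y, hy, z, hz, hyz, hzb⟩ := h.exists_first_after (S := {a, c}) (by simp)
    (by simp [*, hab.symm])
  obtain rfl | rfl : y = a ∨ y = c := hy
  · refine absurd (ReflTransGen.head ?_ (hzb.mono ?_)) (hE.not_reach_of_mem_of_mem hab hbc ebc eca)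
    all_goals grind [deleteVerts]
  · refine ReflTransGen.head ?_ (hzb.mono ?_)
    all_goals grind [deleteVerts]

-- Otherwise `a → p → c` for some `p`, and the walk from `c` through `b` to `a` can be taken to
-- avoid `p`: a step through `p` would create a directed 4-cycle.
theorem ShortCycles.mem_of_reach_of_reach (hE : ShortCycles E) (hab : a ≠ b) (hbc : b ≠ c)
    (hca : c ≠ a) (eab : (a, b) ∈ E) (ebc : (b, c) ∈ E) (eca : (c, a) ∈ E)
    (hac : Reach (deleteVerts E {b}) a c) (hcb : Reach (deleteVerts E {a}) c b)
    (hba : Reach (deleteVerts E {c}) b a) : (a, c) ∈ E := by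
  by_contra hac'
  have hE' (S : Set V) : ShortCycles (deleteVerts E S) := hE.mono deleteVerts_subset
  obtain hac | ⟨p, hpa, hpc, hap, hpc'⟩ :=
    (hE' _).mem_or_exists_mem hac hca.symm ⟨eca, hbc.symm, hab⟩
  · exact hac' hac.1
  obtain ⟨eap, -, hpb⟩ := hap
  have epc := hpc'.1
  have hcb : Reach (deleteVerts (deleteVerts E {a}) {p}) c b := by
    refine (hE' _).reach_deleteVerts_singleton hcb ⟨ebc, hab.symm, hca⟩ hpc.symm (Ne.symm hpb) ?_
    intro _ epb
    refine hE.not_reach_of_mem_of_mem hab hbc ebc eca (.head (b := p) ?_ (.single ?_))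
    all_goals grind [deleteVerts]
  have hba : Reach (deleteVerts (deleteVerts E {c}) {p}) b a := by
    refine (hE' _).reach_deleteVerts_singleton hba ⟨eab, hca.symm, hbc⟩ (Ne.symm hpb) hpa.symm ?_
    intro ebp _
    refine hE.not_reach_of_mem_of_mem hbc hca eca eab (.head (b := p) ?_ (.single ?_))
    all_goals grind [deleteVerts]
  refine hE.not_reach_of_mem_of_mem hca hpa.symm eap epc ((hcb.mono ?_).trans (hba.mono ?_))
  all_goals grind [deleteVerts]

theorem ShortCycles.eq_of_ear (hE : ShortCycles E) (hT : (bidirectedGraph E).IsNClique 3 T)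
    (hr : r ∈ T) (hs : s ∈ T) (hx : x ∉ T) (hrx : (r, x) ∈ E) (hxs : ExitsAt E T x s) :
    r = s := by
  classical
  by_contra hrs
  obtain ⟨y, hy, hxy, hys⟩ := hxs
  obtain ⟨t, ht, htrs⟩ := Finset.exists_mem_notMem_of_card_lt_card (s := {r, s}) (t := T) (by
    rw [hT.card_eq]
    exact Finset.card_le_two.trans_lt (by decide))
  have htr : t ≠ r := by grind
  have hst : s ≠ t := by grind
  have est : (s, t) ∈ E := (hT.isClique hs ht hst).2.1
  have etr : (t, r) ∈ E := (hT.isClique ht hr htr).2.1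
  refine hE.not_reach_of_mem_of_mem hrs hst est etr (.head ?_ ((hxy.mono ?_).tail ?_))
  · grind [deleteVerts]
  · intro e he
    grind [deleteVerts]
  · grind [deleteVerts]

theorem StronglyConnects.exists_exitsAt (hconn : StronglyConnects E) (hS : S.Nonempty)
    (hx : x ∉ S) : ∃ t ∈ S, ExitsAt E S x t := by
  obtain ⟨t, ht⟩ := hS
  obtain ⟨y, hy, z, hz, hxy, hyz⟩ := Reach.exists_last_before (hconn x t) hx ht
  exact ⟨z, hz, y, hy, hxy, hyz⟩

theorem ExitsAt.head (h : ExitsAt E S y t) (hx : x ∉ S) (hy : y ∉ S) (hxy : (x, y) ∈ E) :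
    ExitsAt E S x t := by
  obtain ⟨z, hz, hyz, hzt⟩ := h
  exact ⟨z, hz, .head ⟨hxy, hx, hy⟩ hyz, hzt⟩

theorem ShortCycles.exitsAt_unique (hE : ShortCycles E) (hconn : StronglyConnects E)
    (hT : (bidirectedGraph E).IsNClique 3 T) (hx : x ∉ T) (hs : s ∈ T) (ht : t ∈ T)
    (hxs : ExitsAt E T x s) (hxt : ExitsAt E T x t) : s = t := by
  obtain ⟨r, hr, z, hz, hrz, hzx⟩ :=
    Reach.exists_first_after (S := (T : Set V)) (hconn s x) hs hx
  have hear {q : V} (hq : q ∈ T) (hxq : ExitsAt E T x q) : r = q := by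
    obtain ⟨y, hy, hxy, hyq⟩ := hxq
    exact hE.eq_of_ear hT hr hq hz hrz ⟨y, hy, hzx.trans hxy, hyq⟩
  exact (hear hs hxs).symm.trans (hear ht hxt)

-- The vertices outside `T` that exit at `t` form a union of components of the graph without `t`.
theorem ShortCycles.exitsAt_of_adj (hE : ShortCycles E) (hconn : StronglyConnects E)
    (hT : (bidirectedGraph E).IsNClique 3 T) (ht : t ∈ T) (hx : x ∉ T) (hxt : ExitsAt E T x t)
    (hyt : y ≠ t) (hxy : (x, y) ∈ E ∨ (y, x) ∈ E) : y ∉ T ∧ ExitsAt E T y t := by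
  have hy : y ∉ T := by
    intro hy
    rcases hxy with hxy | hyx
    · exact hyt (hE.exitsAt_unique hconn hT hx hy ht ⟨x, hx, .refl, hxy⟩ hxt)
    · exact hyt (hE.eq_of_ear hT hy ht hx hyx hxt)
  refine ⟨hy, ?_⟩
  rcases hxy with hxy | hyx
  · obtain ⟨s, hs, hys⟩ := hconn.exists_exitsAt (S := T) ⟨t, ht⟩ hy
    obtain rfl := hE.exitsAt_unique hconn hT hx hs ht (hys.head hx hy hxy) hxt
    exact hys
  · exact hxt.head hy hx hyx

theorem ShortCycles.exists_isCutVertex (hE : ShortCycles E) (hconn : StronglyConnects E)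
    (hT : (bidirectedGraph E).IsNClique 3 T) (hd : d ∉ T) : ∃ t, IsCutVertex E t := by
  have hcard : 1 < T.card := by simp [hT.card_eq]
  have hT₀ : (T : Set V).Nonempty := Finset.card_pos.1 (zero_lt_one.trans hcard)
  obtain ⟨t, ht, hdt⟩ := hconn.exists_exitsAt hT₀ hd
  obtain ⟨s, hs, hst⟩ := Finset.exists_mem_ne hcard t
  refine ⟨t, d, s, ne_of_mem_of_not_mem ht hd |>.symm, hst, fun hds => ?_⟩
  have hsT : s ∉ T ∧ ExitsAt E T s t := by
    clear hst hs
    induction hds with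
    | refl => exact ⟨hd, hdt⟩
    | tail _ hpq ih => exact hE.exitsAt_of_adj hconn hT ht ih.1 ih.2 hpq.2.1 hpq.2.2
  exact hsT.1 hs

theorem ShortCycles.bidirectedGraph_cliqueFree (hE : ShortCycles E) (hconn : StronglyConnects E)
    (hcard : 4 ≤ ENat.card V) (hcut : ∀ w, ¬ IsCutVertex E w) :
    (bidirectedGraph E).CliqueFree 3 := by
  intro T hT
  obtain ⟨d, hd⟩ : ∃ d, d ∉ T := by
    by_contra! hall
    have huniv : (T : Set V) = Set.univ := Set.eq_univ_of_forall hall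
    rw [← Set.encard_univ, ← huniv, Set.encard_coe_eq_coe_finsetCard, hT.card_eq] at hcard
    exact absurd hcard (by decide)
  obtain ⟨t, ht⟩ := hE.exists_isCutVertex hconn hT hd
  exact hcut t ht

theorem ShortCycles.necessary_or_necessary (hE : ShortCycles E) (hconn : StronglyConnects E)
    (hfree : (bidirectedGraph E).CliqueFree 3) (hab : a ≠ b) (hbc : b ≠ c) (hca : c ≠ a)
    (eab : (a, b) ∈ E) (ebc : (b, c) ∈ E) (eca : (c, a) ∈ E) :
    Necessary E (a, b) ∨ Necessary E (b, c) := by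
  classical
  by_contra! ⟨nab, nbc⟩
  have bypass_ab : Reach (E \ {(a, b)}) a b := hconn.diff_of_not_necessary nab a b
  have bypass_bc : Reach (E \ {(b, c)}) b c := hconn.diff_of_not_necessary nbc b c
  have hac := hE.reach_third_of_bypass hab hbc hca ebc eca bypass_ab
  have hcb := hE.third_reach_of_bypass hab hbc hca ebc eca bypass_ab
  have hba := hE.reach_third_of_bypass hbc hca hab eca eab bypass_bc
  have eac := hE.mem_of_reach_of_reach hab hbc hca eab ebc eca hac hcb hba
  have eba := hE.mem_of_reach_of_reach hbc hca hab ebc eca eab hba hac hcb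
  have ecb := hE.mem_of_reach_of_reach hca hab hbc eca eab ebc hcb hba hac
  exact hfree {a, b, c} (SimpleGraph.is3Clique_triple_iff.2
    ⟨⟨hab, eab, eba⟩, ⟨hca.symm, eac, eca⟩, ⟨hbc, ebc, ecb⟩⟩)

theorem Unsatisfied.ne (h : Unsatisfied E (a, b)) : a ≠ b := by
  rintro rfl
  exact h.2 .refl

theorem Unsatisfied.not_necessary_swap (h : Unsatisfied E (a, b)) : ¬ Necessary E (b, a) :=
  fun hba => h.2 (.single hba)

theorem Unsatisfied.not_necessary_of_necessary (h : Unsatisfied E (a, b))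
    (hbc : Necessary E (b, c)) : ¬ Necessary E (c, a) :=
  fun hca => h.2 (.head hbc (.single hca))

-- `(b, a)` is not a necessary edge, so `b` returns to `a` without it.
theorem Unsatisfied.exists_triangle (h : Unsatisfied E (a, b)) (hE : ShortCycles E)
    (hconn : StronglyConnects E) : ∃ c, b ≠ c ∧ c ≠ a ∧ (b, c) ∈ E ∧ (c, a) ∈ E := by
  have hba : Reach (E \ {(b, a)}) b a := hconn.diff_of_not_necessary h.not_necessary_swap b a
  obtain hba | ⟨c, hcb, hca, hbc, hca'⟩ :=
    (hE.mono Set.sdiff_subset).mem_or_exists_mem hba h.ne.symm ⟨h.1, by simp [h.ne]⟩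
  · exact absurd rfl hba.2
  · exact ⟨c, hcb.symm, hca, hbc.1, hca'.1⟩

theorem Unsatisfied.necessary (h : Unsatisfied E (a, b)) (hE : ShortCycles E)
    (hconn : StronglyConnects E) (hfree : (bidirectedGraph E).CliqueFree 3) :
    Necessary E (a, b) := by
  by_contra nab
  obtain ⟨c, hbc, hca, ebc, eca⟩ := h.exists_triangle hE hconn
  have nbc : Necessary E (b, c) :=
    (hE.necessary_or_necessary hconn hfree h.ne hbc hca h.1 ebc eca).resolve_left nab
  have nca : Necessary E (c, a) :=
    (hE.necessary_or_necessary hconn hfree hca h.ne hbc eca h.1 ebc).resolve_right nab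
  exact h.not_necessary_of_necessary nbc nca

theorem Unsatisfied.bypass_of_triangle (hab : Unsatisfied E (a, b)) (hbc : Unsatisfied E (b, c))
    (hE : ShortCycles E) (hconn : StronglyConnects E)
    (hfree : (bidirectedGraph E).CliqueFree 3) (hca : c ≠ a) :
    Reach (deleteVerts E {a}) c b ∧ Reach (deleteVerts E {c}) b a := by
  have nca := hab.not_necessary_of_necessary (hbc.necessary hE hconn hfree)
  have bypass_ca : Reach (E \ {(c, a)}) c a := hconn.diff_of_not_necessary nca c a
  exact ⟨hE.reach_third_of_bypass hca hab.ne hbc.ne hab.1 hbc.1 bypass_ca,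
    hE.third_reach_of_bypass hca hab.ne hbc.ne hab.1 hbc.1 bypass_ca⟩

theorem deleteVerts_subset_diff_singleton (h : a ∈ S ∨ b ∈ S) :
    deleteVerts E S ⊆ E \ {(a, b)} := by
  grind [deleteVerts]

theorem Unsatisfied.reach_diff (huv : Unsatisfied E (u, v)) (hyx : Unsatisfied E (y, x))
    (hE : ShortCycles E) (hconn : StronglyConnects E)
    (hfree : (bidirectedGraph E).CliqueFree 3)
    (hx : Reach (E \ {(u, v)}) u x) : Reach (E \ {(u, v)}) u y := by
  obtain ⟨w, hxw, hwy, exw, ewy⟩ := hyx.exists_triangle hE hconn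
  by_cases hxw_uv : (x, w) = (u, v)
  · obtain ⟨rfl, rfl⟩ := Prod.mk.inj hxw_uv
    exact (hyx.bypass_of_triangle huv hE hconn hfree hwy).2.mono
      (deleteVerts_subset_diff_singleton (.inr rfl))
  have hw : Reach (E \ {(u, v)}) u w := hx.tail ⟨exw, hxw_uv⟩
  by_cases hwy_uv : (w, y) = (u, v)
  · obtain ⟨rfl, rfl⟩ := Prod.mk.inj hwy_uv
    exact hx.trans ((huv.bypass_of_triangle hyx hE hconn hfree hxw).1.mono
      (deleteVerts_subset_diff_singleton (.inl rfl)))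
  · exact hw.tail ⟨ewy, hwy_uv⟩

theorem Unsatisfied.isBridge (huv : Unsatisfied E (u, v)) (hE : ShortCycles E)
    (hconn : StronglyConnects E) (hfree : (bidirectedGraph E).CliqueFree 3) :
    (unsatGraph E).IsBridge s(u, v) := by
  rw [SimpleGraph.isBridge_iff]
  rintro ⟨W⟩
  have hv : ¬ Reach (E \ {(u, v)}) u v :=
    fun h => (huv.necessary hE hconn hfree).2 (hconn.diff_of_reach h)
  obtain ⟨⟨⟨x, y⟩, hadj⟩, -, hx, hy⟩ :=
    W.exists_boundary_dart {z | Reach (E \ {(u, v)}) u z} ReflTransGen.refl hv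
  obtain ⟨⟨-, hxy | hyx⟩, hne⟩ := SimpleGraph.deleteEdges_adj.1 hadj
  · exact hy (ReflTransGen.tail hx ⟨hxy.1, fun heq => hne <| by simp_all⟩)
  · exact hy (huv.reach_diff hyx hE hconn hfree hx)

theorem ShortCycles.isAcyclic_unsatGraph (hE : ShortCycles E) (hconn : StronglyConnects E)
    (hfree : (bidirectedGraph E).CliqueFree 3) : (unsatGraph E).IsAcyclic := by
  rw [SimpleGraph.isAcyclic_iff_forall_adj_isBridge]
  rintro a b ⟨-, hab | hba⟩
  · exact hab.isBridge hE hconn hfree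
  · exact Sym2.eq_swap ▸ hba.isBridge hE hconn hfree

end

theorem unsatisfied_edges_acyclic_general {V : Type*} (E : Set (V × V))
    (hconn : StronglyConnects E)
    (hcyc : ∀ c : List V, IsCycle E c → c.length ≤ 3)
    (hcard : 4 ≤ ENat.card V)
    (hcut : ∀ w : V, ¬ IsCutVertex E w) :
    (unsatGraph E).IsAcyclic := by
  have hE : ShortCycles E := hcyc
  exact hE.isAcyclic_unsatGraph hconn (hE.bidirectedGraph_cliqueFree hconn hcard hcut)

/-- The unsatisfied edges of `G` form a forest in the underlying
undirected graph: there is no undirected cycle all of whose edges come from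
unsatisfied edges. -/
theorem unsatisfied_edges_acyclic {V : Type*} [Fintype V] (E : Set (V × V))
    (hconn : StronglyConnects E)
    (hcyc : ∀ c : List V, IsCycle E c → c.length ≤ 3)
    (hcard : 4 ≤ Fintype.card V)
    (hcut : ∀ w : V, ¬ IsCutVertex E w) :
    (unsatGraph E).IsAcyclic :=
  unsatisfied_edges_acyclic_general E hconn hcyc (by simpa using hcard) hcut
end

section
/- Let G be a strongly connected directed graph in which every directed cycle has at most 3 edges, and suppose u, x, v are three distinct vertices such that all six directed edges (u,x), (x,u), (u,v), (v,u), (x,v), (v,x) are present. Then either G has exactly the three vertices u, x, v, or at least one of u, x, v is a cut vertex of G. -/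
/-! An *ear* of a vertex set `T` is a directed path that leaves `T` and later returns to it, running
outside `T` in between. If `T` is a clique of `n` vertices, then an ear from `a` to `b ≠ a`, closed
up by a Hamiltonian path of `T` from `b` to `a`, is a directed cycle of more than `n` edges. So if
no directed cycle is that long, all ears of `T` are closed. By strong connectivity every vertex `z`
then has a unique root: the only vertex of `T` from which `z` can be reached, and the only one to
which `z` can return, without meeting `T` on the way. Adjacent vertices that are not both in `T`
have the same root, so an undirected path can only change root by passing through the root itself.
-/

section

open Relation

variable {V : Type*} {E : Set (V × V)} {T : Set V} {a b y z : V}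

/-- There is a directed path from `a` to `z` all of whose vertices after `a` lie outside `T`:
the outgoing half of an ear when `a ∈ T`. The trivial path is allowed. -/
def LeavesTo (E : Set (V × V)) (T : Set V) (a z : V) : Prop :=
  ReflTransGen (fun p q => (p, q) ∈ E ∧ q ∉ T) a z

/-- There is a directed path from `z` to `b` all of whose vertices before `b` lie outside `T`:
the returning half of an ear when `b ∈ T`. The trivial path is allowed. -/
def ReturnsTo (E : Set (V × V)) (T : Set V) (z b : V) : Prop :=
  ReflTransGen (fun p q => (p, q) ∈ E ∧ p ∉ T) z b

/-- Every ear of `T` ends where it started. An ear is encoded by its two ends `a`, `b` and one of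
its vertices `z` outside `T`. -/
def EarsClosed (E : Set (V × V)) (T : Set V) : Prop :=
  ∀ ⦃a b z : V⦄, a ∈ T → b ∈ T → z ∉ T → LeavesTo E T a z → ReturnsTo E T z b → a = b

/-- `a` is a root of `z` with respect to `T`: a vertex of `T` from which `z` is reached, and to
which it returns, outside `T`. A vertex of `T` is its own root, through trivial paths. -/
structure IsRoot (E : Set (V × V)) (T : Set V) (a z : V) : Prop where
  mem : a ∈ T
  leavesTo : LeavesTo E T a z
  returnsTo : ReturnsTo E T z a

theorem isCycle_cons_of_isChain {l : List V} (hnodup : (a :: l).Nodup)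
    (hchain : (a :: l ++ [a]).IsChain fun p q => (p, q) ∈ E) : IsCycle E (a :: l) := by
  refine ⟨List.cons_ne_nil a l, hnodup, ?_⟩
  rintro ⟨p, q⟩ hpq
  rw [cycleEdges, List.rotate_cons_succ, List.rotate_zero] at hpq
  exact (List.forall₂_iff_zip.1 (List.isChain_cons_append_singleton_iff_forall₂.1 hchain)).2 hpq

theorem exists_nodup_isChain_cons_of_reflTransGen {r : V → V → Prop} (h : ReflTransGen r a y) :
    ∃ l : List V, (a :: l).Nodup ∧ (a :: l).IsChain r ∧
      (a :: l).getLast (List.cons_ne_nil a l) = y := by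
  induction h using ReflTransGen.head_induction_on with
  | refl => exact ⟨[], List.nodup_singleton y, .singleton y, rfl⟩
  | @head a c hac _ ih =>
    obtain ⟨l, hnodup, hchain, hlast⟩ := ih
    by_cases ha : a ∈ c :: l
    · obtain ⟨p, q, hpq⟩ := List.append_of_mem ha
      have hsuffix : a :: q <:+ c :: l := ⟨p, hpq.symm⟩
      exact ⟨q, hnodup.sublist hsuffix.sublist, hchain.suffix hsuffix,
        (hsuffix.getLast (List.cons_ne_nil a q)).trans hlast⟩
    · exact ⟨c :: l, List.nodup_cons.2 ⟨ha, hnodup⟩, .cons_cons hac hchain,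
        (List.getLast_cons_cons ..).trans hlast⟩

theorem ReturnsTo.leavesTo (h : ReturnsTo E T z y) (hy : y ∉ T) : LeavesTo E T z y := by
  induction h with
  | refl => exact .refl
  | tail _ hxy ih => exact (ih hxy.2).tail ⟨hxy.1, hy⟩

theorem exists_ear_s10 (ha : a ∈ T) (hb : b ∈ T) (hz : z ∉ T) (haz : LeavesTo E T a z)
    (hzb : ReturnsTo E T z b) :
    ∃ l : List V, l ≠ [] ∧ l.Nodup ∧ (∀ x ∈ l, x ∉ T) ∧
      (a :: l ++ [b]).IsChain fun p q => (p, q) ∈ E := by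
  obtain rfl | ⟨y, hzy, hyb, hy⟩ := hzb.cases_tail
  · exact absurd hb hz
  have hay : LeavesTo E T a y := haz.trans (ReturnsTo.leavesTo hzy hy)
  obtain ⟨l, hnodup, hchain, hlast⟩ := exists_nodup_isChain_cons_of_reflTransGen hay
  obtain ⟨ha_l, hl_nodup⟩ := List.nodup_cons.1 hnodup
  refine ⟨l, ?_, hl_nodup, fun x hx => ?_, ?_⟩
  · rintro rfl
    exact hy (hlast ▸ ha)
  · have hx_start_or : x = a ∨ x ∉ T :=
      hchain.cons_induction (fun x => x = a ∨ x ∉ T) l (fun _ _ h _ => .inr h.2) (.inl rfl) x hx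
    exact hx_start_or.resolve_left fun hxa => ha_l (hxa ▸ hx)
  · refine (hchain.imp fun _ _ h => h.1).append (.singleton b) ?_
    rw [List.getLast?_eq_some_getLast (List.cons_ne_nil a l), hlast]
    simpa using hyb

theorem exists_hamiltonian_path_of_clique {K : Finset V}
    (hclique : (K : Set V).Pairwise fun p q => (p, q) ∈ E) (ha : a ∈ K) (hb : b ∈ K)
    (hab : a ≠ b) :
    ∃ m : List V, (∀ x, x ∈ a :: m ++ [b] ↔ x ∈ K) ∧ (a :: m ++ [b]).Nodup ∧
      (a :: m ++ [b]).IsChain fun p q => (p, q) ∈ E := by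
  classical
  let m := ((K.erase a).erase b).toList
  have hmem (x : V) : x ∈ a :: m ++ [b] ↔ x ∈ K := by
    simp only [m, List.cons_append, List.mem_cons, List.mem_append, Finset.mem_toList,
      Finset.mem_erase, List.not_mem_nil, or_false]
    grind
  have hnodup : (a :: m ++ [b]).Nodup := by
    simp only [m, List.cons_append, List.nodup_cons, List.nodup_append, List.mem_append,
      Finset.mem_toList, Finset.mem_erase, List.mem_singleton, Finset.nodup_toList]
    grind
  refine ⟨m, hmem, hnodup, (hnodup.pairwise_of_set_pairwise ?_).isChain⟩
  simp only [hmem]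
  exact hclique

theorem earsClosed_of_clique {K : Finset V}
    (hclique : (K : Set V).Pairwise fun p q => (p, q) ∈ E)
    (hcyc : ∀ c : List V, IsCycle E c → c.length ≤ K.card) : EarsClosed E K := by
  intro a b z ha hb hz haz hzb
  by_contra hab
  obtain ⟨l, hl_ne, hl_nodup, hl_notMem, hl_chain⟩ := exists_ear_s10 ha hb hz haz hzb
  obtain ⟨m, hm_mem, hm_nodup, hm_chain⟩ :=
    exists_hamiltonian_path_of_clique hclique hb ha (Ne.symm hab)
  have hcycle : IsCycle E (b :: m ++ [a] ++ l) := by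
    refine isCycle_cons_of_isChain (hm_nodup.append hl_nodup ?_) ?_
    · exact fun x hxm hxl => hl_notMem x hxl ((hm_mem x).1 hxm)
    · simpa using hm_chain.append_overlap hl_chain (List.cons_ne_nil a [])
  have hcard : (b :: m ++ [a]).length = K.card := by
    classical
    rw [← List.toFinset_card_of_nodup hm_nodup]
    congr 1
    ext x
    rw [List.mem_toFinset, hm_mem]
  have hlen := hcyc _ hcycle
  rw [List.length_append, hcard] at hlen
  have hl_pos := List.length_pos_iff.2 hl_ne
  omega

theorem exists_mem_reflTransGen_notMem {r : V → V → Prop} (ha : a ∈ T)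
    (h : ReflTransGen r a z) : ∃ t ∈ T, ReflTransGen (fun p q => r p q ∧ q ∉ T) t z := by
  induction h with
  | refl => exact ⟨a, ha, .refl⟩
  | @tail y z _ hyz ih =>
    by_cases hz : z ∈ T
    · exact ⟨z, hz, .refl⟩
    · obtain ⟨t, ht, hty⟩ := ih
      exact ⟨t, ht, hty.tail ⟨hyz, hz⟩⟩

theorem StronglyConnects.exists_leavesTo (hconn : StronglyConnects E) (hT : T.Nonempty) (z : V) :
    ∃ a ∈ T, LeavesTo E T a z :=
  let ⟨t, ht⟩ := hT
  exists_mem_reflTransGen_notMem ht (hconn t z)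

theorem StronglyConnects.exists_returnsTo (hconn : StronglyConnects E) (hT : T.Nonempty) (z : V) :
    ∃ b ∈ T, ReturnsTo E T z b := by
  obtain ⟨t, ht⟩ := hT
  obtain ⟨b, hb, hbz⟩ := exists_mem_reflTransGen_notMem ht (reflTransGen_swap.2 (hconn z t))
  exact ⟨b, hb, reflTransGen_swap.1 hbz⟩

theorem IsRoot.eq_of_mem (h : IsRoot E T a z) (hz : z ∈ T) : z = a := by
  obtain hza | ⟨_, _, _, hz'⟩ := h.leavesTo.cases_tail
  · exact hza
  · exact absurd hz hz'

namespace EarsClosed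

theorem exists_isRoot (hT : EarsClosed E T) (hconn : StronglyConnects E) (hne : T.Nonempty)
    (z : V) : ∃ a, IsRoot E T a z := by
  by_cases hz : z ∈ T
  · exact ⟨z, hz, .refl, .refl⟩
  · obtain ⟨a, ha, haz⟩ := hconn.exists_leavesTo hne z
    obtain ⟨b, hb, hzb⟩ := hconn.exists_returnsTo hne z
    obtain rfl : a = b := hT ha hb hz haz hzb
    exact ⟨a, ha, haz, hzb⟩

theorem isRoot_eq_of_edge (hT : EarsClosed E T) (hyz : (y, z) ∈ E) (hyzT : y ∉ T ∨ z ∉ T)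
    (hay : IsRoot E T a y) (hbz : IsRoot E T b z) : a = b := by
  rcases hyzT with hy | hz
  · exact hT hay.mem hbz.mem hy hay.leavesTo (hbz.returnsTo.head ⟨hyz, hy⟩)
  · exact hT hay.mem hbz.mem hz (hay.leavesTo.tail ⟨hyz, hz⟩) hbz.returnsTo

theorem isRoot_of_path_avoiding (hT : EarsClosed E T) (hconn : StronglyConnects E) {w : V}
    (haw : IsRoot E T a w)
    (hpath : ReflTransGen (fun p q => p ≠ a ∧ q ≠ a ∧ ((p, q) ∈ E ∨ (q, p) ∈ E)) w z) :
    IsRoot E T a z := by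
  induction hpath with
  | refl => exact haw
  | @tail y z _ hyz ih =>
    obtain ⟨hya, -, hedge⟩ := hyz
    have hy : y ∉ T := fun hy => hya (ih.eq_of_mem hy)
    obtain ⟨b, hbz⟩ := hT.exists_isRoot hconn ⟨a, haw.mem⟩ z
    obtain rfl : a = b := by
      rcases hedge with hyz | hzy
      · exact hT.isRoot_eq_of_edge hyz (.inl hy) ih hbz
      · exact (hT.isRoot_eq_of_edge hzy (.inr hy) hbz ih).symm
    exact hbz

theorem exists_isCutVertex (hT : EarsClosed E T) (hconn : StronglyConnects E)
    (hnontriv : T.Nontrivial) {w : V} (hw : w ∉ T) : ∃ a ∈ T, IsCutVertex E a := by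
  obtain ⟨a, haw⟩ := hT.exists_isRoot hconn hnontriv.nonempty w
  obtain ⟨b, hb, hba⟩ := hnontriv.exists_ne a
  have hwa : w ≠ a := fun h => hw (h ▸ haw.mem)
  exact ⟨a, haw.mem, w, b, hwa, hba, fun hpath =>
    hba ((hT.isRoot_of_path_avoiding hconn haw hpath).eq_of_mem hb)⟩

end EarsClosed

theorem triangle_forces_cut_vertex_general (hconn : StronglyConnects E) {K : Finset V}
    (hnontriv : (K : Set V).Nontrivial)
    (hclique : (K : Set V).Pairwise fun p q => (p, q) ∈ E)
    (hcyc : ∀ c : List V, IsCycle E c → c.length ≤ K.card) :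
    (∀ w : V, w ∈ K) ∨ ∃ a ∈ K, IsCutVertex E a :=
  or_iff_not_imp_left.2 fun hall =>
    let ⟨_, hw⟩ := not_forall.1 hall
    (earsClosed_of_clique hclique hcyc).exists_isCutVertex hconn hnontriv hw

end

/-- In a strongly connected digraph with no directed cycle of more
than 3 edges, if all six edges are present among three distinct vertices
`u`, `x`, `v`, then either these are the only vertices or one of them is a
cut vertex. -/
theorem triangle_forces_cut_vertex {V : Type*} [Fintype V] (E : Set (V × V))
    (hconn : StronglyConnects E)
    (hcyc : ∀ c : List V, IsCycle E c → c.length ≤ 3)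
    (u x v : V) (hux : u ≠ x) (huv : u ≠ v) (hxv : x ≠ v)
    (h1 : (u, x) ∈ E) (h2 : (x, u) ∈ E) (h3 : (u, v) ∈ E)
    (h4 : (v, u) ∈ E) (h5 : (x, v) ∈ E) (h6 : (v, x) ∈ E) :
    (∀ w : V, w = u ∨ w = x ∨ w = v) ∨
      (IsCutVertex E u ∨ IsCutVertex E x ∨ IsCutVertex E v) := by
  classical
  simpa using triangle_forces_cut_vertex_general hconn (K := {u, x, v})
    ⟨u, by simp, x, by simp, hux⟩ (by simp [Set.pairwise_insert, h1, h2, h3, h4, h5, h6])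
    (by rwa [Finset.card_eq_three.2 ⟨u, x, v, hux, huv, hxv, rfl⟩])
end
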